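/- arXiv:1407.5518 — 2 statements merged into one kernel-verified Lean document; each statement's English description precedes it below -/
import Mathlib

section
/- Let Ω ⊂ ℝ^n be an open bounded convex domain with boundary ∂Ω of class C^2. Then for every u ∈ W^{1,p}_0(Ω), ∫_Ω |∇u(x)|^p dx ≥ C_p ∫_Ω |u(x)|^p/δ(x)^p dx + (p-1)·C_p·R_in^{-p} ∫_Ω |u(x)|^p dx. -/
open MeasureTheory Metric Set Filter Bornology
open scoped ENNReal Topology

noncomputable section

namespace RobinHardy

/-- Distance to the boundary of `Ω`. -/
def sdist {n : ℕ} (Ω : Set (EuclideanSpace ℝ (Fin n))) (x : EuclideanSpace ℝ (Fin n)) : ℝ :=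
  Metric.infDist x (frontier Ω)

/-- The in-radius of `Ω`, i.e. `sup_{x ∈ Ω} dist(x, ∂Ω)`. -/
def inradius {n : ℕ} (Ω : Set (EuclideanSpace ℝ (Fin n))) : ℝ :=
  sSup (sdist Ω '' Ω)

/-- The surface measure on `∂Ω`: the `(n-1)`-dimensional Hausdorff measure restricted
to the boundary of `Ω`. -/
def surf {n : ℕ} (Ω : Set (EuclideanSpace ℝ (Fin n))) :
    Measure (EuclideanSpace ℝ (Fin n)) :=
  (Measure.hausdorffMeasure ((n : ℝ) - 1)).restrict (frontier Ω)

/-- `Ω` has boundary of class `C²`: near every boundary point, `Ω` is a sublevel set of a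
`C²` function with non-vanishing differential. -/
def HasC2Boundary {n : ℕ} (Ω : Set (EuclideanSpace ℝ (Fin n))) : Prop :=
  ∀ x ∈ frontier Ω, ∃ (U : Set (EuclideanSpace ℝ (Fin n)))
    (f : EuclideanSpace ℝ (Fin n) → ℝ), IsOpen U ∧ x ∈ U ∧ ContDiff ℝ 2 f ∧
      (∀ y ∈ U, fderiv ℝ f y ≠ 0) ∧ Ω ∩ U = {y ∈ U | f y < 0} ∧
      frontier Ω ∩ U = {y ∈ U | f y = 0}

/-- Membership in `W^{1,p}(Ω)`, realized via functions continuous up to the boundary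
(providing the boundary trace), differentiable in `Ω`, with finite `L^p`-integrals of the
function and of its gradient. -/
def MemW1p {n : ℕ} (p : ℝ) (Ω : Set (EuclideanSpace ℝ (Fin n)))
    (u : EuclideanSpace ℝ (Fin n) → ℝ) : Prop :=
  ContinuousOn u (closure Ω) ∧ (∀ x ∈ Ω, DifferentiableAt ℝ u x) ∧
    (∫⁻ x in Ω, ENNReal.ofReal (|u x| ^ p)) ≠ ∞ ∧
    (∫⁻ x in Ω, ENNReal.ofReal (‖fderiv ℝ u x‖ ^ p)) ≠ ∞

/-- The `p`-th power of the `W^{1,p}(Ω)`-distance between two functions. -/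
def W1pDist {n : ℕ} (p : ℝ) (Ω : Set (EuclideanSpace ℝ (Fin n)))
    (u v : EuclideanSpace ℝ (Fin n) → ℝ) : ℝ≥0∞ :=
  (∫⁻ x in Ω, ENNReal.ofReal (|u x - v x| ^ p)) +
    ∫⁻ x in Ω, ENNReal.ofReal (‖fderiv ℝ u x - fderiv ℝ v x‖ ^ p)

/-- Membership in `W^{1,p}_{0,Γ}(Ω)`: the closure, in the `W^{1,p}(Ω)`-norm, of the set of
`C¹` functions vanishing on `Γ`. -/
def MemW1pGamma {n : ℕ} (p : ℝ) (Ω Γ : Set (EuclideanSpace ℝ (Fin n)))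
    (u : EuclideanSpace ℝ (Fin n) → ℝ) : Prop :=
  MemW1p p Ω u ∧ ∃ v : ℕ → EuclideanSpace ℝ (Fin n) → ℝ,
    (∀ j, ContDiff ℝ 1 (v j)) ∧ (∀ j, ∀ x ∈ Γ, v j x = 0) ∧
      Tendsto (fun j => W1pDist p Ω (v j) u) atTop (𝓝 0)

/-- Membership in `W^{1,p}_0(Ω)`: the closure of `C_c^∞(Ω)` in the `W^{1,p}(Ω)`-norm. -/
def MemW1p0 {n : ℕ} (p : ℝ) (Ω : Set (EuclideanSpace ℝ (Fin n)))
    (u : EuclideanSpace ℝ (Fin n) → ℝ) : Prop :=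
  MemW1p p Ω u ∧ ∃ v : ℕ → EuclideanSpace ℝ (Fin n) → ℝ,
    (∀ j, ContDiff ℝ (⊤ : ℕ∞) (v j) ∧ HasCompactSupport (v j) ∧ tsupport (v j) ⊆ Ω) ∧
      Tendsto (fun j => W1pDist p Ω (v j) u) atTop (𝓝 0)

/-- The class `Σ_Γ` of boundary functions: `σ = +∞` on `Γ` and `σ` essentially bounded
on `∂Ω \ cl(Γ)`. -/
def SigmaGamma {n : ℕ} (Ω Γ : Set (EuclideanSpace ℝ (Fin n)))
    (σ : EuclideanSpace ℝ (Fin n) → ℝ≥0∞) : Prop :=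
  (∀ y ∈ Γ, σ y = ∞) ∧
    essSup σ ((surf Ω).restrict (frontier Ω \ closure Γ)) ≠ ∞

/-- `α(x) = ((p-1)/p)·σ(π(x))^{1/(1-p)}`, where `π` is a nearest-point projection onto `∂Ω`
(with the conventions `α(x) = 0` when `σ(π(x)) = ∞` and `α(x) = ∞` when `σ(π(x)) = 0`,
built into the `ℝ≥0∞`-valued power). -/
def alphaF {n : ℕ} (p : ℝ) (σ : EuclideanSpace ℝ (Fin n) → ℝ≥0∞)
    (π : EuclideanSpace ℝ (Fin n) → EuclideanSpace ℝ (Fin n))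
    (x : EuclideanSpace ℝ (Fin n)) : ℝ≥0∞ :=
  ENNReal.ofReal ((p - 1) / p) * σ (π x) ^ (1 / (1 - p))

/-- The weighted norm `‖u‖_{p,σ}^p = ∫_Ω |u(x)|^p/(δ(x)+α(x))^p dx`. -/
def wnorm {n : ℕ} (p : ℝ) (Ω : Set (EuclideanSpace ℝ (Fin n)))
    (σ : EuclideanSpace ℝ (Fin n) → ℝ≥0∞)
    (π : EuclideanSpace ℝ (Fin n) → EuclideanSpace ℝ (Fin n))
    (u : EuclideanSpace ℝ (Fin n) → ℝ) : ℝ≥0∞ :=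
  ∫⁻ x in Ω, ENNReal.ofReal (|u x| ^ p) /
    (ENNReal.ofReal (sdist Ω x) + alphaF p σ π x) ^ p

/-- The Robin functional `Q_p[σ,u] = ∫_Ω |∇u|^p dx + ∫_{∂Ω} σ|u|^p dν`, the boundary
integral being taken over the set where `σ` is finite. -/
def Qp {n : ℕ} (p : ℝ) (Ω : Set (EuclideanSpace ℝ (Fin n)))
    (σ : EuclideanSpace ℝ (Fin n) → ℝ≥0∞)
    (u : EuclideanSpace ℝ (Fin n) → ℝ) : ℝ≥0∞ :=
  (∫⁻ x in Ω, ENNReal.ofReal (‖fderiv ℝ u x‖ ^ p)) +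
    ∫⁻ y in frontier Ω ∩ {y | σ y ≠ ∞}, σ y * ENNReal.ofReal (|u y| ^ p) ∂(surf Ω)

/-- The variational quantity `λ_p(Ω,σ) = inf { Q_p[σ,u]/‖u‖_{p,σ}^p : u ∈ W^{1,p}_{0,Γ}(Ω), u ≠ 0 }`. -/
def lam {n : ℕ} (p : ℝ) (Ω Γ : Set (EuclideanSpace ℝ (Fin n)))
    (σ : EuclideanSpace ℝ (Fin n) → ℝ≥0∞)
    (π : EuclideanSpace ℝ (Fin n) → EuclideanSpace ℝ (Fin n)) : ℝ≥0∞ :=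
  ⨅ (u : EuclideanSpace ℝ (Fin n) → ℝ) (_ : MemW1pGamma p Ω Γ u)
    (_ : wnorm p Ω σ π u ≠ 0), Qp p Ω σ u / wnorm p Ω σ π u

/-- The variational quantity `λ_p(Ω,σ)` with the infimum over all of `W^{1,p}(Ω)`. -/
def lamAll {n : ℕ} (p : ℝ) (Ω : Set (EuclideanSpace ℝ (Fin n)))
    (σ : EuclideanSpace ℝ (Fin n) → ℝ≥0∞)
    (π : EuclideanSpace ℝ (Fin n) → EuclideanSpace ℝ (Fin n)) : ℝ≥0∞ :=
  ⨅ (u : EuclideanSpace ℝ (Fin n) → ℝ) (_ : MemW1p p Ω u)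
    (_ : wnorm p Ω σ π u ≠ 0), Qp p Ω σ u / wnorm p Ω σ π u

/-- `α = ((p-1)/p)·σ^{1/(1-p)}` for a constant boundary parameter `σ > 0`. -/
def alphaC (p σ : ℝ) : ℝ := ((p - 1) / p) * σ ^ (1 / (1 - p))

/-- `‖u‖_{p,σ}^p` for a constant boundary parameter `σ`. -/
def wnormC {n : ℕ} (p : ℝ) (Ω : Set (EuclideanSpace ℝ (Fin n))) (σ : ℝ)
    (u : EuclideanSpace ℝ (Fin n) → ℝ) : ℝ≥0∞ :=
  ∫⁻ x in Ω, ENNReal.ofReal (|u x| ^ p / (sdist Ω x + alphaC p σ) ^ p)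

/-- `Q_p[σ,u]` for a constant boundary parameter `σ`. -/
def QpC {n : ℕ} (p : ℝ) (Ω : Set (EuclideanSpace ℝ (Fin n))) (σ : ℝ)
    (u : EuclideanSpace ℝ (Fin n) → ℝ) : ℝ≥0∞ :=
  (∫⁻ x in Ω, ENNReal.ofReal (‖fderiv ℝ u x‖ ^ p)) +
    ENNReal.ofReal σ * ∫⁻ y, ENNReal.ofReal (|u y| ^ p) ∂(surf Ω)

/-- `λ_p(Ω,σ)` for a constant boundary parameter `σ`. -/
def lamC {n : ℕ} (p : ℝ) (Ω : Set (EuclideanSpace ℝ (Fin n))) (σ : ℝ) : ℝ≥0∞ :=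
  ⨅ (u : EuclideanSpace ℝ (Fin n) → ℝ) (_ : MemW1p p Ω u)
    (_ : wnormC p Ω σ u ≠ 0), QpC p Ω σ u / wnormC p Ω σ u

open scoped Gradient NNReal Pointwise

/-!
On a convex domain the distance `δ` to the boundary is concave, hence weakly superharmonic, and
`|∇δ| = 1` almost everywhere. Testing superharmonicity with `G(δ)|v|^p`, where `G ≥ 0`, and
absorbing the term containing `∇v` by Young's inequality gives
`∫ (-G'(δ) - (p - 1) G(δ)^(p/(p-1))) |v|^p ≤ ∫ |∇v|^p`. With
`G(s) = ((p-1)/p)^(p-1) (s^(1-p) - R^(1-p))`, superadditivity of `t ↦ t^(p/(p-1))` bounds the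
weight on the left from below by the one of the improved Hardy inequality, and Fatou's lemma
carries the estimate from compactly supported `v` over to `W₀^{1,p}`.
-/

section DistanceToFrontier

lemma infDist_frontier_pos {X : Type*} [PseudoMetricSpace X] {Ω : Set X} (hΩ : IsOpen Ω)
    (hF : (frontier Ω).Nonempty) {x : X} (hx : x ∈ Ω) : 0 < infDist x (frontier Ω) :=
  (isClosed_frontier.notMem_iff_infDist_pos hF).1
    ((disjoint_frontier_iff_isOpen.2 hΩ).notMem_of_mem_right hx)

variable {E : Type*} [NormedAddCommGroup E] [NormedSpace ℝ E] {Ω : Set E}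

lemma ball_infDist_frontier_subset (hΩ : IsOpen Ω) {x : E} (hx : x ∈ Ω) :
    ball x (infDist x (frontier Ω)) ⊆ Ω := by
  rcases le_or_gt (infDist x (frontier Ω)) 0 with h | h
  · simp [ball_eq_empty.2 h]
  refine (convex_ball x _).isPreconnected.subset_of_closure_inter_subset hΩ
    ⟨x, mem_ball_self h, hx⟩ ?_
  rintro y ⟨hy, hyB⟩
  by_contra hyΩ
  exact disjoint_ball_infDist.notMem_of_mem_left hyB (hΩ.frontier_eq ▸ ⟨hy, hyΩ⟩)

lemma concaveOn_infDist_frontier (hΩ : IsOpen Ω) (hF : (frontier Ω).Nonempty)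
    (hconv : Convex ℝ Ω) : ConcaveOn ℝ Ω (infDist · (frontier Ω)) := by
  refine concaveOn_iff_forall_pos.2 ⟨hconv, fun x hx y hy a b ha hb hab => ?_⟩
  set r := infDist x (frontier Ω)
  set s := infDist y (frontier Ω)
  have hballs : ball (a • x + b • y) (a * r + b * s) ⊆ Ω := by
    have hrpos : 0 < r := infDist_frontier_pos hΩ hF hx
    have hspos : 0 < s := infDist_frontier_pos hΩ hF hy
    calc ball (a • x + b • y) (a * r + b * s) = a • ball x r + b • ball y s := by
          rw [_root_.smul_ball ha.ne', _root_.smul_ball hb.ne', Real.norm_of_nonneg ha.le,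
            Real.norm_of_nonneg hb.le, ball_add_ball (by positivity) (by positivity)]
      _ ⊆ a • Ω + b • Ω := Set.add_subset_add
          (smul_set_mono (ball_infDist_frontier_subset hΩ hx))
          (smul_set_mono (ball_infDist_frontier_subset hΩ hy))
      _ ⊆ Ω := convex_iff_pointwise_add_subset.1 hconv ha.le hb.le hab
  refine (le_infDist hF).2 fun z hz => ?_
  by_contra! hlt
  have hzΩ : z ∈ Ω := hballs (by simpa [dist_comm] using hlt)
  exact (disjoint_frontier_iff_isOpen.2 hΩ).notMem_of_mem_right hzΩ hz

lemma fderiv_infDist_apply_le {K : Set E} {x y : E} (hy : y ∈ K) (hxy : infDist x K = dist x y)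
    (hd : DifferentiableAt ℝ (infDist · K) x) :
    fderiv ℝ (infDist · K) x (y - x) ≤ -‖y - x‖ := by
  refine le_of_tendsto (hd.hasFDerivAt.hasLineDerivAt (y - x)).tendsto_slope_zero_right ?_
  filter_upwards [Ioo_mem_nhdsGT (zero_lt_one (α := ℝ))] with t ht
  have hdist : infDist (x + t • (y - x)) K ≤ (1 - t) * ‖y - x‖ :=
    calc infDist (x + t • (y - x)) K ≤ dist (x + t • (y - x)) y := infDist_le_dist_of_mem hy
      _ = ‖(1 - t) • (y - x)‖ := by rw [dist_comm, dist_eq_norm]; congr 1; module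
      _ = (1 - t) * ‖y - x‖ := by rw [norm_smul, Real.norm_of_nonneg (by linarith [ht.2])]
  rw [smul_eq_mul, inv_mul_le_iff₀ ht.1, hxy, dist_comm, dist_eq_norm]
  linarith

lemma norm_fderiv_infDist_eq_one [ProperSpace E] {K : Set E} (hK : IsClosed K) (hne : K.Nonempty)
    {x : E} (hx : x ∉ K) (hd : DifferentiableAt ℝ (infDist · K) x) :
    ‖fderiv ℝ (infDist · K) x‖ = 1 := by
  obtain ⟨y, hy, hxy⟩ := hK.exists_infDist_eq_dist hne x
  refine le_antisymm (norm_fderiv_le_of_lipschitz ℝ (lipschitz_infDist_pt K)) ?_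
  have hpos : 0 < ‖y - x‖ := norm_pos_iff.2 (sub_ne_zero.2 fun h => hx (h ▸ hy))
  refine le_of_mul_le_mul_right ?_ hpos
  calc 1 * ‖y - x‖ ≤ -fderiv ℝ (infDist · K) x (y - x) := by
        linarith [fderiv_infDist_apply_le hy hxy hd]
    _ ≤ ‖fderiv ℝ (infDist · K) x (y - x)‖ := neg_le_abs _
    _ ≤ ‖fderiv ℝ (infDist · K) x‖ * ‖y - x‖ := (fderiv ℝ (infDist · K) x).le_opNorm _

end DistanceToFrontier

section ConcaveFunctions

variable {E : Type*} [NormedAddCommGroup E] [NormedSpace ℝ E] {Ω : Set E} {D : E → ℝ} {x y : E}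

lemma sub_le_fderiv_of_concaveOn (hD : ConcaveOn ℝ Ω D) (hx : x ∈ Ω) (hy : y ∈ Ω)
    (hdx : DifferentiableAt ℝ D x) : D y - D x ≤ fderiv ℝ D x (y - x) := by
  refine ge_of_tendsto (hdx.hasFDerivAt.hasLineDerivAt (y - x)).tendsto_slope_zero_right ?_
  filter_upwards [Ioo_mem_nhdsGT (zero_lt_one (α := ℝ))] with t ht
  have hconc : (1 - t) * D x + t * D y ≤ D (x + t • (y - x)) := by
    rw [show x + t • (y - x) = (1 - t) • x + t • y by module]
    exact hD.2 hx hy (sub_nonneg.2 ht.2.le) ht.1.le (by ring)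
  rw [smul_eq_mul, le_inv_mul_iff₀ ht.1]
  linarith

lemma fderiv_apply_sub_le_of_concaveOn (hD : ConcaveOn ℝ Ω D) (hx : x ∈ Ω) (hy : y ∈ Ω)
    (hdx : DifferentiableAt ℝ D x) (hdy : DifferentiableAt ℝ D y) :
    fderiv ℝ D y (y - x) ≤ fderiv ℝ D x (y - x) := by
  have hxy := sub_le_fderiv_of_concaveOn hD hx hy hdx
  have hyx := sub_le_fderiv_of_concaveOn hD hy hx hdy
  rw [← neg_sub y x, map_neg] at hyx
  linarith

lemma lineDeriv_le_lineDeriv_sub_smul_of_concaveOn (hD : ConcaveOn ℝ Ω D) {v : E} {t : ℝ}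
    (ht : 0 < t) (hx : x ∈ Ω) (hy : x - t • v ∈ Ω) (hdx : DifferentiableAt ℝ D x)
    (hdy : DifferentiableAt ℝ D (x - t • v)) :
    lineDeriv ℝ D x v ≤ lineDeriv ℝ D (x - t • v) v := by
  have h := fderiv_apply_sub_le_of_concaveOn hD hy hx hdy hdx
  rw [sub_sub_cancel, map_smul, map_smul] at h
  rw [hdx.lineDeriv_eq_fderiv, hdy.lineDeriv_eq_fderiv]
  exact le_of_smul_le_smul_left h ht

end ConcaveFunctions

lemma integral_translate_sub_mul {G : Type*} [AddGroup G] [MeasurableSpace G] [MeasurableAdd G]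
    {μ : Measure G} [μ.IsAddRightInvariant] {f g : G → ℝ} (w : G)
    (hfg : Integrable (fun x => f x * g x) μ) (hfg' : Integrable (fun x => f (x + w) * g x) μ) :
    ∫ x, (f (x + w) - f x) * g x ∂μ = ∫ x, f x * (g (x - w) - g x) ∂μ := by
  have hfg'' : Integrable (fun x => f x * g (x - w)) μ := by
    simpa [sub_eq_add_neg] using hfg'.comp_add_right (-w)
  simp_rw [sub_mul, mul_sub]
  rw [integral_sub hfg' hfg, integral_sub hfg'' hfg,
    ← integral_sub_right_eq_self (fun x => f (x + w) * g x) w]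
  simp

section WeakSuperharmonicity

variable {E : Type*} [NormedAddCommGroup E] [NormedSpace ℝ E] {Ω : Set E} {D f : E → ℝ}
  {C C' : ℝ≥0}

lemma lineDeriv_eq_zero_of_notMem_tsupport {x : E} (hx : x ∉ tsupport f) (v : E) :
    lineDeriv ℝ f x v = 0 := by
  rw [(notMem_tsupport_iff_eventuallyEq.1 hx).lineDeriv_eq]
  simp [lineDeriv]

variable [MeasurableSpace E] [BorelSpace E] {μ : Measure E} [μ.IsAddHaarMeasure]

lemma integral_translate_sub_mul_lineDeriv_nonneg {S : Set E} {v : E} {t : ℝ}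
    (hD : ConcaveOn ℝ Ω D) (hSΩ : S ⊆ Ω) (hDd : ∀ᵐ x ∂μ, DifferentiableAt ℝ D x)
    (hDi : Integrable (S.indicator fun x => lineDeriv ℝ D x v) μ) (hf : Continuous f)
    (hf0 : ∀ x, 0 ≤ f x) (hfc : HasCompactSupport f) (hfS : tsupport f ⊆ S) (ht : 0 < t)
    (hfSt : ∀ x ∈ tsupport f, x - t • v ∈ S) :
    0 ≤ ∫ x, (f (x + t • v) - f x) * S.indicator (fun x => lineDeriv ℝ D x v) x ∂μ := by
  obtain ⟨M, hM⟩ := hfc.exists_bound_of_continuous hf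
  rw [integral_translate_sub_mul _
    (hDi.bdd_mul hf.aestronglyMeasurable (Eventually.of_forall hM))
    (hDi.bdd_mul (hf.comp (by fun_prop)).aestronglyMeasurable
      (Eventually.of_forall fun x => hM _))]
  have hDd' : ∀ᵐ x ∂μ, DifferentiableAt ℝ D (x - t • v) :=
    (measurePreserving_sub_right μ (t • v)).quasiMeasurePreserving.ae hDd
  refine integral_nonneg_of_ae ?_
  filter_upwards [hDd, hDd'] with x hdx hdx'
  by_cases hx : x ∈ tsupport f
  · refine mul_nonneg (hf0 x) (sub_nonneg.2 ?_)
    rw [indicator_of_mem (hfS hx), indicator_of_mem (hfSt x hx)]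
    exact lineDeriv_le_lineDeriv_sub_smul_of_concaveOn hD ht (hSΩ (hfS hx)) (hSΩ (hfSt x hx))
      hdx hdx'
  · simp [image_eq_zero_of_notMem_tsupport hx]

lemma integrable_lineDeriv_mul_lineDeriv (hDl : LipschitzWith C D) (hf : LipschitzWith C' f)
    (hfc : HasCompactSupport f) (v : E) :
    Integrable (fun x => lineDeriv ℝ f x v * lineDeriv ℝ D x v) μ := by
  have hfv : Integrable (fun x => lineDeriv ℝ f x v) μ := by
    refine (integrableOn_iff_integrable_of_support_subset (s := tsupport f) fun x hx =>
      by_contra fun h => hx (lineDeriv_eq_zero_of_notMem_tsupport h v)).1 ?_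
    exact IntegrableOn.of_bound hfc.isCompact.measure_lt_top
      (measurable_lineDeriv hf.continuous).aestronglyMeasurable (C' * ‖v‖)
      (Eventually.of_forall fun x => norm_lineDeriv_le_of_lipschitz ℝ hf)
  exact hfv.mul_bdd (measurable_lineDeriv hDl.continuous).aestronglyMeasurable
    (Eventually.of_forall fun x => norm_lineDeriv_le_of_lipschitz ℝ hDl)

variable [FiniteDimensional ℝ E]

lemma integral_lineDeriv_mul_lineDeriv_nonneg (hΩ : IsOpen Ω) (hD : ConcaveOn ℝ Ω D)
    (hDl : LipschitzWith C D) (hf : LipschitzWith C' f) (hf0 : ∀ x, 0 ≤ f x)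
    (hfc : HasCompactSupport f) (hfΩ : tsupport f ⊆ Ω) (v : E) :
    0 ≤ ∫ x, lineDeriv ℝ f x v * lineDeriv ℝ D x v ∂μ := by
  obtain ⟨r, hr, hrΩ⟩ := hfc.isCompact.exists_cthickening_subset_open hΩ hfΩ
  set S := cthickening r (tsupport f)
  have hSc : IsCompact S := hfc.isCompact.cthickening
  have hfS : tsupport f ⊆ S := self_subset_cthickening _
  set g := S.indicator fun x => lineDeriv ℝ D x v
  have hg : Integrable g μ := by
    rw [integrable_indicator_iff hSc.measurableSet]
    exact IntegrableOn.of_bound hSc.measure_lt_top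
      (measurable_lineDeriv hDl.continuous).aestronglyMeasurable (C * ‖v‖)
      (Eventually.of_forall fun x => norm_lineDeriv_le_of_lipschitz ℝ hDl)
  have hfg : ∀ x, lineDeriv ℝ f x v * lineDeriv ℝ D x v = lineDeriv ℝ f x v * g x := by
    intro x
    by_cases hx : x ∈ S
    · simp only [g, indicator_of_mem hx]
    · simp only [lineDeriv_eq_zero_of_notMem_tsupport (fun h => hx (hfS h)), zero_mul]
  simp_rw [hfg]
  refine ge_of_tendsto
    (hf.integral_inv_smul_sub_mul_tendsto_integral_lineDeriv_mul (μ := μ) hg v) ?_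
  have hsmall : ∀ᶠ t : ℝ in 𝓝[>] 0, ‖t • v‖ ≤ r := by
    have : Tendsto (fun t : ℝ => ‖t • v‖) (𝓝[>] 0) (𝓝 0) := by
      simpa using (Continuous.tendsto (f := fun t : ℝ => ‖t • v‖) (by fun_prop) 0).mono_left
        nhdsWithin_le_nhds
    exact this.eventually_le_const hr
  filter_upwards [hsmall, self_mem_nhdsWithin] with t htr ht
  simp_rw [smul_eq_mul, mul_assoc, integral_const_mul]
  refine mul_nonneg (inv_nonneg.2 (le_of_lt ht))
    (integral_translate_sub_mul_lineDeriv_nonneg hD hrΩ hDl.ae_differentiableAt hg hf.continuous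
      hf0 hfc hfS ht fun x hx => ?_)
  exact mem_cthickening_of_dist_le _ x r _ hx (by simpa [dist_eq_norm] using htr)

end WeakSuperharmonicity

section WeakSuperharmonicityGradient

variable {E : Type*} [NormedAddCommGroup E] [InnerProductSpace ℝ E] [FiniteDimensional ℝ E]
  {Ω : Set E} {D f : E → ℝ} {C C' : ℝ≥0}

lemma fderiv_apply_gradient_eq_sum_lineDeriv {x : E} (hf : DifferentiableAt ℝ f x)
    (hD : DifferentiableAt ℝ D x) :
    fderiv ℝ f x (∇ D x) = ∑ i, lineDeriv ℝ f x (stdOrthonormalBasis ℝ E i) *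
      lineDeriv ℝ D x (stdOrthonormalBasis ℝ E i) := by
  simp only [hf.lineDeriv_eq_fderiv, hD.lineDeriv_eq_fderiv, ← inner_gradient_left]
  rw [← OrthonormalBasis.sum_inner_mul_inner (stdOrthonormalBasis ℝ E)]
  exact Finset.sum_congr rfl fun i _ => by rw [real_inner_comm (∇ D x)]

variable [MeasurableSpace E] [BorelSpace E] {μ : Measure E} [μ.IsAddHaarMeasure]

lemma fderiv_apply_gradient_ae_eq (hDl : LipschitzWith C D) (hf : LipschitzWith C' f) :
    (fun x => fderiv ℝ f x (∇ D x)) =ᵐ[μ] fun x =>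
      ∑ i, lineDeriv ℝ f x (stdOrthonormalBasis ℝ E i) *
        lineDeriv ℝ D x (stdOrthonormalBasis ℝ E i) := by
  filter_upwards [hf.ae_differentiableAt, hDl.ae_differentiableAt] with x hfx hDx
  exact fderiv_apply_gradient_eq_sum_lineDeriv hfx hDx

lemma integrable_fderiv_apply_gradient (hDl : LipschitzWith C D) (hf : LipschitzWith C' f)
    (hfc : HasCompactSupport f) : Integrable (fun x => fderiv ℝ f x (∇ D x)) μ :=
  (integrable_finsetSum _ fun _ _ => integrable_lineDeriv_mul_lineDeriv hDl hf hfc _).congr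
    (fderiv_apply_gradient_ae_eq hDl hf).symm

lemma setIntegral_fderiv_apply_gradient_nonneg (hΩ : IsOpen Ω) (hD : ConcaveOn ℝ Ω D)
    (hDl : LipschitzWith C D) (hf : LipschitzWith C' f) (hf0 : ∀ x, 0 ≤ f x)
    (hfc : HasCompactSupport f) (hfΩ : tsupport f ⊆ Ω) :
    0 ≤ ∫ x in Ω, fderiv ℝ f x (∇ D x) ∂μ := by
  rw [setIntegral_eq_integral_of_forall_compl_eq_zero fun x hx => by
    rw [fderiv_of_notMem_tsupport ℝ fun h => hx (hfΩ h), zero_apply]]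
  rw [integral_congr_ae (fderiv_apply_gradient_ae_eq hDl hf),
    integral_finsetSum _ fun _ _ => integrable_lineDeriv_mul_lineDeriv hDl hf hfc _]
  exact Finset.sum_nonneg fun _ _ =>
    integral_lineDeriv_mul_lineDeriv_nonneg hΩ hD hDl hf hf0 hfc hfΩ _

end WeakSuperharmonicityGradient

section LipschitzCompactSupport

variable {X F F' : Type*} [PseudoMetricSpace X] [NormedAddCommGroup F] [NormedAddCommGroup F']

lemma exists_lipschitzWith_of_locallyLipschitz_of_hasCompactSupport [ProperSpace X] {f : X → F}
    (hf : LocallyLipschitz f) (hfc : HasCompactSupport f) : ∃ C, LipschitzWith C f := by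
  obtain ⟨C, hC⟩ := hf.locallyLipschitzOn.exists_lipschitzOnWith_of_compact
    (hfc.isCompact.cthickening (r := 1))
  obtain ⟨M, hM⟩ := hfc.exists_bound_of_continuous hf.continuous
  have key : ∀ x ∈ tsupport f, ∀ y, dist (f x) (f y) ≤ max (C : ℝ) M * dist x y := by
    intro x hx y
    by_cases hy : y ∈ cthickening 1 (tsupport f)
    · refine (hC.dist_le_mul x (self_subset_cthickening _ hx) y hy).trans ?_
      gcongr
      exact le_max_left _ _
    · have hxy : 1 ≤ dist x y := by
        by_contra! h
        exact hy (mem_cthickening_of_dist_le y x 1 _ hx (by rw [dist_comm]; exact h.le))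
      rw [image_eq_zero_of_notMem_tsupport fun h => hy (self_subset_cthickening _ h),
        dist_zero_right]
      calc ‖f x‖ ≤ max (C : ℝ) M * 1 := by rw [mul_one]; exact (hM x).trans (le_max_right _ _)
        _ ≤ max (C : ℝ) M * dist x y := by gcongr
  refine ⟨_, LipschitzWith.of_dist_le' (K := max (C : ℝ) M) fun x y => ?_⟩
  by_cases hx : x ∈ tsupport f
  · exact key x hx y
  by_cases hy : y ∈ tsupport f
  · simpa only [dist_comm] using key y hy x
  · rw [image_eq_zero_of_notMem_tsupport hx, image_eq_zero_of_notMem_tsupport hy, dist_self]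
    exact mul_nonneg (le_max_of_le_left C.2) dist_nonneg

lemma locallyLipschitz_comp_of_contDiffAt [NormedSpace ℝ F] [NormedSpace ℝ F'] {P : X → F}
    {Ψ : F → F'} {C : ℝ≥0} (hP : LipschitzWith C P)
    (hΨ : ∀ x ∈ tsupport (Ψ ∘ P), ContDiffAt ℝ 1 Ψ (P x)) : LocallyLipschitz (Ψ ∘ P) := by
  intro x
  by_cases hx : x ∈ tsupport (Ψ ∘ P)
  · obtain ⟨K, t, ht, hK⟩ := (hΨ x hx).exists_lipschitzOnWith
    exact ⟨K * C, P ⁻¹' t, hP.continuous.continuousAt ht,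
      hK.comp hP.lipschitzOnWith (mapsTo_preimage P t)⟩
  · exact ⟨0, (tsupport (Ψ ∘ P))ᶜ, (isClosed_tsupport _).isOpen_compl.mem_nhds hx,
      LipschitzOnWith.of_dist_le_mul fun y hy z hz => by
        rw [image_eq_zero_of_notMem_tsupport hy, image_eq_zero_of_notMem_tsupport hz, dist_self]
        positivity⟩

end LipschitzCompactSupport

lemma young_rpow_mul_le {p a ξ N G : ℝ} (hp : 1 < p) (hξ : |ξ| ≤ N) (hG : 0 ≤ G) :
    G * (p * |a| ^ (p - 2) * a * ξ) ≤ N ^ p + (p - 1) * G ^ (p / (p - 1)) * |a| ^ p := by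
  have hp0 : 0 < p := by linarith
  have hp1 : 0 < p - 1 := by linarith
  have habs : |a| ^ (p - 2) * a * ξ ≤ |ξ| * |a| ^ (p - 1) := by
    rcases eq_or_ne a 0 with rfl | ha
    · simp only [mul_zero, zero_mul]; positivity
    · calc |a| ^ (p - 2) * a * ξ = |a| ^ (p - 2) * (a * ξ) := mul_assoc _ _ _
        _ ≤ |a| ^ (p - 2) * |a * ξ| := by gcongr; exact le_abs_self _
        _ = |ξ| * |a| ^ (p - 2 + 1) := by
            rw [abs_mul, Real.rpow_add_one (abs_ne_zero.2 ha)]; ring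
        _ = |ξ| * |a| ^ (p - 1) := by ring_nf
  have hyoung : |ξ| * (G * |a| ^ (p - 1)) ≤
      |ξ| ^ p / p + (G * |a| ^ (p - 1)) ^ (p / (p - 1)) / (p / (p - 1)) :=
    Real.young_inequality_of_nonneg (abs_nonneg ξ) (by positivity)
      (Real.HolderConjugate.conjExponent hp)
  have hpow : (G * |a| ^ (p - 1)) ^ (p / (p - 1)) = G ^ (p / (p - 1)) * |a| ^ p := by
    rw [Real.mul_rpow hG (by positivity), ← Real.rpow_mul (abs_nonneg a),
      mul_div_cancel₀ p hp1.ne']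
  calc G * (p * |a| ^ (p - 2) * a * ξ) = G * p * (|a| ^ (p - 2) * a * ξ) := by ring
    _ ≤ G * p * (|ξ| * |a| ^ (p - 1)) := by gcongr
    _ = p * (|ξ| * (G * |a| ^ (p - 1))) := by ring
    _ ≤ p * (|ξ| ^ p / p + (G * |a| ^ (p - 1)) ^ (p / (p - 1)) / (p / (p - 1))) := by gcongr
    _ = |ξ| ^ p + (p - 1) * G ^ (p / (p - 1)) * |a| ^ p := by rw [hpow]; field_simp
    _ ≤ N ^ p + (p - 1) * G ^ (p / (p - 1)) * |a| ^ p := by gcongr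

/-- `G ≥ 0` is of class `C¹` on `S` and solves the Riccati inequality
`w + (p - 1) G ^ (p / (p - 1)) ≤ -G'` for a weight `w ≥ 0`. Along a distance function `δ` with
values in `S`, the vector field `G(δ)∇δ` then certifies a Hardy inequality with weight `w(δ)`. -/
structure IsHardyProfile (p : ℝ) (S : Set ℝ) (G w : ℝ → ℝ) : Prop where
  contDiffAt : ∀ s ∈ S, ContDiffAt ℝ 1 G s
  nonneg : ∀ s ∈ S, 0 ≤ G s
  weight_nonneg : ∀ s ∈ S, 0 ≤ w s
  riccati : ∀ s ∈ S, w s + (p - 1) * G s ^ (p / (p - 1)) ≤ -deriv G s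

lemma lintegral_ofReal_le_of_add_le {α : Type*} [MeasurableSpace α] {μ : Measure α}
    {φ I F : α → ℝ} (hφ : 0 ≤ᵐ[μ] φ) (hφF : ∀ᵐ x ∂μ, φ x + I x ≤ F x) (hF0 : 0 ≤ᵐ[μ] F)
    (hI : Integrable I μ) (hF : Integrable F μ) (hI0 : 0 ≤ ∫ x, I x ∂μ) :
    ∫⁻ x, ENNReal.ofReal (φ x) ∂μ ≤ ∫⁻ x, ENNReal.ofReal (F x) ∂μ := by
  have hFI : ∀ᵐ x ∂μ, φ x ≤ F x - I x := hφF.mono fun x hx => le_sub_iff_add_le.2 hx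
  calc ∫⁻ x, ENNReal.ofReal (φ x) ∂μ
      ≤ ∫⁻ x, ENNReal.ofReal (F x - I x) ∂μ :=
        lintegral_mono_ae (hFI.mono fun x hx => ENNReal.ofReal_le_ofReal hx)
    _ = ENNReal.ofReal (∫ x, F x - I x ∂μ) :=
        (ofReal_integral_eq_lintegral_ofReal (hF.sub hI) (hφ.trans hFI)).symm
    _ ≤ ENNReal.ofReal (∫ x, F x ∂μ) := by
        rw [integral_sub hF hI]
        exact ENNReal.ofReal_le_ofReal (sub_le_self _ hI0)
    _ = ∫⁻ x, ENNReal.ofReal (F x) ∂μ := ofReal_integral_eq_lintegral_ofReal hF hF0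

lemma integrable_norm_fderiv_rpow {E : Type*} [NormedAddCommGroup E] [NormedSpace ℝ E]
    [MeasurableSpace E] [OpensMeasurableSpace E] {μ : Measure E} [IsFiniteMeasureOnCompacts μ]
    {p : ℝ} {v : E → ℝ} {C : ℝ≥0} (hp : 0 < p) (hv : LipschitzWith C v)
    (hvc : HasCompactSupport v) : Integrable (fun x => ‖fderiv ℝ v x‖ ^ p) μ := by
  refine (integrableOn_iff_integrable_of_support_subset (s := tsupport v) fun x hx =>
    by_contra fun h => hx (by simp [fderiv_of_notMem_tsupport ℝ h, hp.ne'])).1 ?_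
  refine IntegrableOn.of_bound hvc.isCompact.measure_lt_top
    ((measurable_fderiv ℝ v).norm.pow_const p).aestronglyMeasurable ((C : ℝ) ^ p)
    (Eventually.of_forall fun x => ?_)
  rw [Real.norm_of_nonneg (by positivity)]
  gcongr
  exact norm_fderiv_le_of_lipschitz ℝ hv

lemma tsupport_comp_mul_abs_rpow_subset {X : Type*} [TopologicalSpace X] {p : ℝ} (hp : p ≠ 0)
    {G : ℝ → ℝ} {D v : X → ℝ} : tsupport (fun x => G (D x) * |v x| ^ p) ⊆ tsupport v :=
  tsupport_mul_subset_right.trans (tsupport_comp_subset (g := fun t => |t| ^ p) (by simp [hp]) v)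

namespace IsHardyProfile

variable {p : ℝ} {S : Set ℝ} {G w : ℝ → ℝ}

lemma exists_lipschitzWith_comp_mul_abs_rpow {X : Type*} [PseudoMetricSpace X]
    [ProperSpace X] {D v : X → ℝ} (hG : IsHardyProfile p S G w) (hp : 1 < p) {C C' : ℝ≥0}
    (hD : LipschitzWith C D) (hDS : ∀ x ∈ tsupport v, D x ∈ S) (hv : LipschitzWith C' v)
    (hvc : HasCompactSupport v) :
    ∃ K, LipschitzWith K fun x => G (D x) * |v x| ^ p := by
  have hsupp := tsupport_comp_mul_abs_rpow_subset (by linarith : p ≠ 0) (G := G) (D := D) (v := v)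
  refine exists_lipschitzWith_of_locallyLipschitz_of_hasCompactSupport
    (locallyLipschitz_comp_of_contDiffAt (Ψ := fun q : ℝ × ℝ => G q.1 * |q.2| ^ p)
      (hD.prodMk hv) fun x hx => ?_) (hvc.mono' ((subset_tsupport _).trans hsupp))
  have hGx : ContDiffAt ℝ 1 G (D x) := hG.contDiffAt _ (hDS x (hsupp hx))
  exact (hGx.comp (D x, v x) contDiffAt_fst).mul
    ((contDiff_norm_rpow hp).comp contDiff_snd).contDiffAt

section Normed

variable {E : Type*} [NormedAddCommGroup E] [NormedSpace ℝ E] {D v : E → ℝ}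

lemma fderiv_comp_mul_abs_rpow (hG : IsHardyProfile p S G w) (hp : 1 < p) {x : E} (hx : D x ∈ S)
    (hD : DifferentiableAt ℝ D x) (hv : DifferentiableAt ℝ v x) :
    fderiv ℝ (fun y => G (D y) * |v y| ^ p) x =
      G (D x) • (p * |v x| ^ (p - 2) * v x) • fderiv ℝ v x +
        |v x| ^ p • deriv G (D x) • fderiv ℝ D x :=
  have hGD : HasFDerivAt (fun y => G (D y)) (deriv G (D x) • fderiv ℝ D x) x :=
    ((hG.contDiffAt _ hx).differentiableAt one_ne_zero).hasDerivAt.comp_hasFDerivAt x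
      hD.hasFDerivAt
  have hvp : HasFDerivAt (fun y => |v y| ^ p) ((p * |v x| ^ (p - 2) * v x) • fderiv ℝ v x) x :=
    (hasDerivAt_abs_rpow (v x) hp).comp_hasFDerivAt x hv.hasFDerivAt
  (hGD.mul hvp).fderiv

end Normed

variable {E : Type*} [NormedAddCommGroup E] [InnerProductSpace ℝ E] {D v : E → ℝ}

lemma weight_mul_add_fderiv_le [CompleteSpace E] (hG : IsHardyProfile p S G w) (hp : 1 < p)
    {x : E} (hx : D x ∈ S) (hD : DifferentiableAt ℝ D x) (hD1 : ‖fderiv ℝ D x‖ = 1)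
    (hv : DifferentiableAt ℝ v x) :
    w (D x) * |v x| ^ p + fderiv ℝ (fun y => G (D y) * |v y| ^ p) x (∇ D x) ≤
      ‖fderiv ℝ v x‖ ^ p := by
  have hnorm : ‖∇ D x‖ = 1 := by rw [gradient, LinearIsometryEquiv.norm_map, hD1]
  have heikonal : fderiv ℝ D x (∇ D x) = 1 := by
    rw [← inner_gradient_left, real_inner_self_eq_norm_sq, hnorm, one_pow]
  have hslope : |fderiv ℝ v x (∇ D x)| ≤ ‖fderiv ℝ v x‖ := by
    simpa [hnorm] using (fderiv ℝ v x).le_opNorm (∇ D x)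
  have hyoung := young_rpow_mul_le (a := v x) hp hslope (hG.nonneg _ hx)
  have hriccati := mul_le_mul_of_nonneg_right (hG.riccati _ hx)
    (Real.rpow_nonneg (abs_nonneg (v x)) p)
  rw [hG.fderiv_comp_mul_abs_rpow hp hx hD hv]
  simp only [add_apply, smul_apply, smul_eq_mul, heikonal]
  linarith

variable [FiniteDimensional ℝ E] [MeasurableSpace E] [BorelSpace E] {μ : Measure E}
  [μ.IsAddHaarMeasure] {Ω : Set E} {C C' : ℝ≥0}

lemma lintegral_weight_mul_le (hG : IsHardyProfile p S G w) (hp : 1 < p) (hΩ : IsOpen Ω)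
    (hD : ConcaveOn ℝ Ω D) (hDl : LipschitzWith C D)
    (hD1 : ∀ x ∈ Ω, DifferentiableAt ℝ D x → ‖fderiv ℝ D x‖ = 1) (hDS : MapsTo D Ω S)
    (hv : LipschitzWith C' v) (hvc : HasCompactSupport v) (hvΩ : tsupport v ⊆ Ω) :
    ∫⁻ x in Ω, ENNReal.ofReal (w (D x) * |v x| ^ p) ∂μ ≤
      ∫⁻ x in Ω, ENNReal.ofReal (‖fderiv ℝ v x‖ ^ p) ∂μ := by
  set f : E → ℝ := fun x => G (D x) * |v x| ^ p
  have hfv : tsupport f ⊆ tsupport v := tsupport_comp_mul_abs_rpow_subset (by linarith)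
  have hfc : HasCompactSupport f := hvc.mono' ((subset_tsupport _).trans hfv)
  obtain ⟨K, hfl⟩ :=
    hG.exists_lipschitzWith_comp_mul_abs_rpow hp hDl (fun x hx => hDS (hvΩ hx)) hv hvc
  have hf0 : ∀ x, 0 ≤ f x := fun x => by
    by_cases hx : x ∈ tsupport f
    · exact mul_nonneg (hG.nonneg _ (hDS (hvΩ (hfv hx)))) (by positivity)
    · exact (image_eq_zero_of_notMem_tsupport hx).ge
  refine lintegral_ofReal_le_of_add_le ?_ ?_ (Eventually.of_forall fun x => by positivity)
    (integrable_fderiv_apply_gradient hDl hfl hfc).integrableOn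
    (integrable_norm_fderiv_rpow (by linarith) hv hvc).integrableOn
    (setIntegral_fderiv_apply_gradient_nonneg hΩ hD hDl hfl hf0 hfc (hfv.trans hvΩ))
  · filter_upwards [ae_restrict_mem hΩ.measurableSet] with x hx
    exact mul_nonneg (hG.weight_nonneg _ (hDS hx)) (by positivity)
  · filter_upwards [ae_restrict_of_ae hDl.ae_differentiableAt,
      ae_restrict_of_ae hv.ae_differentiableAt, ae_restrict_mem hΩ.measurableSet] with x hDx hvx hx
    exact hG.weight_mul_add_fderiv_le hp (hDS hx) hDx (hD1 x hx hDx) hvx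

end IsHardyProfile

section LpSpace

variable {α F F' : Type*} [MeasurableSpace α] {μ ν : Measure α} [NormedAddCommGroup F]
  [NormedAddCommGroup F']

lemma lintegral_ofReal_norm_rpow {p : ℝ} (hp : 0 < p) (h : α → F) :
    ∫⁻ x, ENNReal.ofReal (‖h x‖ ^ p) ∂μ = eLpNorm h (ENNReal.ofReal p) μ ^ p := by
  rw [eLpNorm_eq_lintegral_rpow_enorm_toReal (by simpa using hp) ENNReal.ofReal_ne_top,
    ENNReal.toReal_ofReal hp.le, ← ENNReal.rpow_mul, one_div_mul_cancel hp.ne', ENNReal.rpow_one]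
  simp_rw [← ENNReal.ofReal_rpow_of_nonneg (norm_nonneg _) hp.le, ofReal_norm]

lemma lintegral_ofReal_mul_norm_rpow {p : ℝ} (hp : 0 < p) {w : α → ℝ} (hw : Measurable w)
    {h : α → F} (hh : AEStronglyMeasurable h μ) :
    ∫⁻ x, ENNReal.ofReal (w x * ‖h x‖ ^ p) ∂μ =
      eLpNorm h (ENNReal.ofReal p) (μ.withDensity fun x => ENNReal.ofReal (w x)) ^ p := by
  rw [← lintegral_ofReal_norm_rpow hp, lintegral_withDensity_eq_lintegral_mul₀
    hw.ennreal_ofReal.aemeasurable (hh.norm.aemeasurable.pow_const p).ennreal_ofReal]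
  exact lintegral_congr fun x => ENNReal.ofReal_mul' (by positivity)

lemma eLpNorm_le_of_tendsto {q : ℝ≥0∞} (hq : 1 ≤ q) (hνμ : ν ≪ μ) {v : ℕ → α → F} {u : α → F}
    {g : ℕ → α → F'} {u' : α → F'} (hv : ∀ j, AEStronglyMeasurable (v j) μ)
    (hu : AEStronglyMeasurable u μ) (hg : ∀ j, AEStronglyMeasurable (g j) μ)
    (hu' : AEStronglyMeasurable u' μ)
    (hvu : Tendsto (fun j => eLpNorm (v j - u) q μ) atTop (𝓝 0))
    (hgu : Tendsto (fun j => eLpNorm (g j - u') q μ) atTop (𝓝 0))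
    (hvg : ∀ j, eLpNorm (v j) q ν ≤ eLpNorm (g j) q μ) : eLpNorm u q ν ≤ eLpNorm u' q μ := by
  obtain ⟨ns, hns, hae⟩ := (tendstoInMeasure_of_tendsto_eLpNorm
    (zero_lt_one.trans_le hq).ne' hv hu hvu).exists_seq_tendsto_ae
  have hbound : ∀ j, eLpNorm (v (ns j)) q ν ≤
      eLpNorm u' q μ + eLpNorm (g (ns j) - u') q μ := fun j =>
    calc eLpNorm (v (ns j)) q ν ≤ eLpNorm (g (ns j)) q μ := hvg _
      _ = eLpNorm (u' + (g (ns j) - u')) q μ := by rw [add_sub_cancel]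
      _ ≤ eLpNorm u' q μ + eLpNorm (g (ns j) - u') q μ :=
        eLpNorm_add_le hu' ((hg _).sub hu') hq
  have hlim : Tendsto (fun j => eLpNorm u' q μ + eLpNorm (g (ns j) - u') q μ) atTop
      (𝓝 (eLpNorm u' q μ)) := by
    simpa using (hgu.comp hns.tendsto_atTop).const_add (eLpNorm u' q μ)
  calc eLpNorm u q ν ≤ liminf (fun j => eLpNorm (v (ns j)) q ν) atTop :=
        Lp.eLpNorm_lim_le_liminf_eLpNorm (fun j => (hv _).mono_ac hνμ) u (hνμ.ae_le hae)
    _ ≤ liminf (fun j => eLpNorm u' q μ + eLpNorm (g (ns j) - u') q μ) atTop :=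
        liminf_le_liminf (Eventually.of_forall hbound)
    _ = eLpNorm u' q μ := hlim.liminf_eq

lemma tendsto_eLpNorm_zero_of_le {p : ℝ} (hp : 0 < p) {h : ℕ → α → F} {d : ℕ → ℝ≥0∞}
    (hd : Tendsto d atTop (𝓝 0)) (hle : ∀ j, ∫⁻ x, ENNReal.ofReal (‖h j x‖ ^ p) ∂μ ≤ d j) :
    Tendsto (fun j => eLpNorm (h j) (ENNReal.ofReal p) μ) atTop (𝓝 0) := by
  have hroot : Tendsto (fun j => d j ^ p⁻¹) atTop (𝓝 0) := by
    simpa [hp] using hd.ennrpow_const p⁻¹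
  refine tendsto_of_tendsto_of_tendsto_of_le_of_le tendsto_const_nhds hroot
    (fun j => zero_le) fun j => ?_
  exact (ENNReal.le_rpow_inv_iff hp).2 ((lintegral_ofReal_norm_rpow hp (h j)).ge.trans (hle j))

end LpSpace

/-- `u` belongs to `W₀^{1,p}(Ω)` with weak gradient `u'`: both are `L^p(Ω)`-limits, of functions of
class `C¹` with compact support in `Ω` and of their derivatives. Since mollification keeps the
supports in `Ω`, smooth functions would yield the same class. -/
structure HasW1p0Gradient {E : Type*} [NormedAddCommGroup E] [NormedSpace ℝ E]
    [MeasurableSpace E] (μ : Measure E) (p : ℝ) (Ω : Set E) (u : E → ℝ) (u' : E → E →L[ℝ] ℝ) :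
    Prop where
  aestronglyMeasurable : AEStronglyMeasurable u (μ.restrict Ω)
  aestronglyMeasurable_gradient : AEStronglyMeasurable u' (μ.restrict Ω)
  exists_approx : ∃ v : ℕ → E → ℝ,
    (∀ j, ContDiff ℝ 1 (v j) ∧ HasCompactSupport (v j) ∧ tsupport (v j) ⊆ Ω) ∧
    Tendsto (fun j => eLpNorm (v j - u) (ENNReal.ofReal p) (μ.restrict Ω)) atTop (𝓝 0) ∧
    Tendsto (fun j => eLpNorm (fderiv ℝ (v j) - u') (ENNReal.ofReal p) (μ.restrict Ω)) atTop (𝓝 0)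

lemma IsHardyProfile.lintegral_weight_mul_le_of_hasW1p0Gradient {E : Type*} [NormedAddCommGroup E]
    [InnerProductSpace ℝ E] [FiniteDimensional ℝ E] [MeasurableSpace E] [BorelSpace E]
    {μ : Measure E} [μ.IsAddHaarMeasure] {p : ℝ} {S : Set ℝ} {G w : ℝ → ℝ}
    (hG : IsHardyProfile p S G w) (hw : Measurable w) (hp : 1 < p) {Ω : Set E} (hΩ : IsOpen Ω)
    {D : E → ℝ} {C : ℝ≥0} (hD : ConcaveOn ℝ Ω D) (hDl : LipschitzWith C D)
    (hD1 : ∀ x ∈ Ω, DifferentiableAt ℝ D x → ‖fderiv ℝ D x‖ = 1) (hDS : MapsTo D Ω S)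
    {u : E → ℝ} {u' : E → E →L[ℝ] ℝ} (hu : HasW1p0Gradient μ p Ω u u') :
    ∫⁻ x in Ω, ENNReal.ofReal (w (D x) * |u x| ^ p) ∂μ ≤
      ∫⁻ x in Ω, ENNReal.ofReal (‖u' x‖ ^ p) ∂μ := by
  obtain ⟨v, hv, hvu, hvu'⟩ := hu.exists_approx
  have hp0 : 0 < p := by linarith
  have hwD : Measurable fun x => w (D x) := hw.comp hDl.continuous.measurable
  have hvm : ∀ j, AEStronglyMeasurable (v j) (μ.restrict Ω) := fun j =>
    (hv j).1.continuous.aestronglyMeasurable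
  simp_rw [← Real.norm_eq_abs]
  rw [lintegral_ofReal_mul_norm_rpow hp0 hwD hu.aestronglyMeasurable,
    lintegral_ofReal_norm_rpow hp0]
  gcongr
  refine eLpNorm_le_of_tendsto (by simpa using hp.le) (withDensity_absolutelyContinuous _ _) hvm
    hu.aestronglyMeasurable (fun j => (measurable_fderiv ℝ (v j)).aestronglyMeasurable)
    hu.aestronglyMeasurable_gradient hvu hvu' fun j => ?_
  obtain ⟨hv1, hvc, hvΩ⟩ := hv j
  obtain ⟨C', hvl⟩ := hv1.lipschitzWith_of_hasCompactSupport hvc one_ne_zero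
  rw [← ENNReal.rpow_le_rpow_iff hp0, ← lintegral_ofReal_mul_norm_rpow hp0 hwD (hvm j),
    ← lintegral_ofReal_norm_rpow hp0]
  exact hG.lintegral_weight_mul_le hp hΩ hD hDl hD1 hDS hvl hvc hvΩ

/-- The profile used for the improved Hardy inequality: that of the classical one, namely
`((p-1)/p)^(p-1) s^(1-p)`, lowered by a constant so as to vanish at the largest distance `R`. -/
def hardyProfile (p R s : ℝ) : ℝ := ((p - 1) / p) ^ (p - 1) * (s ^ (1 - p) - R ^ (1 - p))

/-- The weight of the improved Hardy inequality, as a function of the distance `s` to the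
boundary, which ranges in `(0, R]`. -/
def hardyWeight (p R s : ℝ) : ℝ :=
  ((p - 1) / p) ^ p / s ^ p + (p - 1) * ((p - 1) / p) ^ p / R ^ p

section HardyProfile

variable {p R s : ℝ}

lemma hasDerivAt_hardyProfile (hs : s ≠ 0) :
    HasDerivAt (hardyProfile p R) (-(((p - 1) / p) ^ (p - 1) * (p - 1) * s ^ (-p))) s := by
  refine (((Real.hasDerivAt_rpow_const (Or.inl hs)).sub_const (R ^ (1 - p))).const_mul
    (((p - 1) / p) ^ (p - 1))).congr_deriv ?_
  rw [sub_sub_cancel_left]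
  ring

lemma rpow_sub_rpow_rpow_conjExponent_le (hp : 1 < p) (hs : 0 < s) (hsR : s ≤ R) :
    (s ^ (1 - p) - R ^ (1 - p)) ^ (p / (p - 1)) ≤ s ^ (-p) - R ^ (-p) := by
  have hp1 : 0 < p - 1 := by linarith
  have hR : 0 < R := hs.trans_le hsR
  have hexp : (1 - p) * (p / (p - 1)) = -p := by field_simp; ring
  have hsub : 0 ≤ s ^ (1 - p) - R ^ (1 - p) :=
    sub_nonneg.2 (Real.rpow_le_rpow_of_nonpos hs hsR (by linarith))
  have hsuper := Real.add_rpow_le_rpow_add hsub (Real.rpow_nonneg hR.le (1 - p))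
    (show 1 ≤ p / (p - 1) by rw [one_le_div hp1]; linarith)
  rw [sub_add_cancel, ← Real.rpow_mul hR.le, ← Real.rpow_mul hs.le, hexp] at hsuper
  linarith

lemma hardyWeight_add_rpow_hardyProfile_le (hp : 1 < p) (hs : 0 < s) (hsR : s ≤ R) :
    hardyWeight p R s + (p - 1) * hardyProfile p R s ^ (p / (p - 1)) ≤
      ((p - 1) / p) ^ (p - 1) * (p - 1) * s ^ (-p) := by
  have hp1 : 0 < p - 1 := by linarith
  have hp0 : 0 < p := by linarith
  have hR : 0 < R := hs.trans_le hsR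
  set c := (p - 1) / p with hc_def
  have hc : 0 < c := by positivity
  have hpow : hardyProfile p R s ^ (p / (p - 1)) =
      c ^ p * (s ^ (1 - p) - R ^ (1 - p)) ^ (p / (p - 1)) := by
    rw [hardyProfile, ← hc_def, Real.mul_rpow (by positivity) (sub_nonneg.2
      (Real.rpow_le_rpow_of_nonpos hs hsR (by linarith))), ← Real.rpow_mul hc.le,
      mul_div_cancel₀ p hp1.ne']
  calc hardyWeight p R s + (p - 1) * hardyProfile p R s ^ (p / (p - 1))
      ≤ hardyWeight p R s + (p - 1) * (c ^ p * (s ^ (-p) - R ^ (-p))) := by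
        rw [hpow]
        gcongr
        exact rpow_sub_rpow_rpow_conjExponent_le hp hs hsR
    _ = p * c ^ p * s ^ (-p) := by
        rw [hardyWeight, Real.rpow_neg hs.le, Real.rpow_neg hR.le, ← hc_def]
        ring
    _ = c ^ (p - 1) * (p - 1) * s ^ (-p) := by
        rw [Real.rpow_sub_one hc.ne', hc_def]
        field_simp

lemma isHardyProfile_hardyProfile (hp : 1 < p) :
    IsHardyProfile p (Ioc 0 R) (hardyProfile p R) (hardyWeight p R) where
  contDiffAt s hs := contDiffAt_const.mul
    ((Real.contDiffAt_rpow_const_of_ne hs.1.ne').sub contDiffAt_const)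
  nonneg s hs := mul_nonneg (Real.rpow_nonneg (div_nonneg (by linarith) (by linarith)) _)
    (sub_nonneg.2 (Real.rpow_le_rpow_of_nonpos hs.1 hs.2 (by linarith)))
  weight_nonneg s hs := by
    have hp1 : 0 < p - 1 := by linarith
    have hs0 : 0 < s := hs.1
    have hR : 0 < R := hs0.trans_le hs.2
    unfold hardyWeight
    positivity
  riccati s hs := by
    rw [(hasDerivAt_hardyProfile hs.1.ne').deriv, neg_neg]
    exact hardyWeight_add_rpow_hardyProfile_le hp hs.1 hs.2

lemma measurable_hardyWeight : Measurable (hardyWeight p R) :=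
  ((measurable_id.pow_const p).const_div _).add_const _

lemma lintegral_hardyWeight_mul {α : Type*} [MeasurableSpace α] {μ : Measure α} (hp : 1 < p)
    {δ u : α → ℝ} (hδ : ∀ᵐ x ∂μ, δ x ∈ Ioc 0 R) (hδm : AEMeasurable δ μ) (hu : AEMeasurable u μ) :
    ∫⁻ x, ENNReal.ofReal (hardyWeight p R (δ x) * |u x| ^ p) ∂μ =
      ENNReal.ofReal (((p - 1) / p) ^ p) * (∫⁻ x, ENNReal.ofReal (|u x| ^ p / δ x ^ p) ∂μ) +
        ENNReal.ofReal ((p - 1) * ((p - 1) / p) ^ p / R ^ p) *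
          ∫⁻ x, ENNReal.ofReal (|u x| ^ p) ∂μ := by
  have hp1 : 0 < p - 1 := by linarith
  have hmeas : AEMeasurable (fun x => ENNReal.ofReal (|u x| ^ p / δ x ^ p)) μ :=
    ((hu.abs.pow_const p).div (hδm.pow_const p)).ennreal_ofReal
  rw [← lintegral_const_mul' _ _ ENNReal.ofReal_ne_top,
    ← lintegral_const_mul' _ _ ENNReal.ofReal_ne_top, ← lintegral_add_left' (hmeas.const_mul _)]
  refine lintegral_congr_ae (hδ.mono fun x hx => ?_)
  have hδ0 : 0 < δ x := hx.1
  have hR : 0 < R := hδ0.trans_le hx.2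
  beta_reduce
  rw [← ENNReal.ofReal_mul (by positivity), ← ENNReal.ofReal_mul (by positivity),
    ← ENNReal.ofReal_add (by positivity) (by positivity), hardyWeight]
  congr 1
  ring

end HardyProfile

theorem hardy_improved_dirichlet_general {E : Type*} [NormedAddCommGroup E]
    [InnerProductSpace ℝ E] [FiniteDimensional ℝ E] [MeasurableSpace E] [BorelSpace E]
    {μ : Measure E} [μ.IsAddHaarMeasure] {p R : ℝ} (hp : 1 < p) {Ω : Set E} (hΩ : IsOpen Ω)
    (hF : (frontier Ω).Nonempty) (hconv : Convex ℝ Ω)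
    (hR : ∀ x ∈ Ω, infDist x (frontier Ω) ≤ R) {u : E → ℝ} {u' : E → E →L[ℝ] ℝ}
    (hu : HasW1p0Gradient μ p Ω u u') :
    ENNReal.ofReal (((p - 1) / p) ^ p) *
          (∫⁻ x in Ω, ENNReal.ofReal (|u x| ^ p / infDist x (frontier Ω) ^ p) ∂μ) +
        ENNReal.ofReal ((p - 1) * ((p - 1) / p) ^ p / R ^ p) *
          ∫⁻ x in Ω, ENNReal.ofReal (|u x| ^ p) ∂μ ≤
      ∫⁻ x in Ω, ENNReal.ofReal (‖u' x‖ ^ p) ∂μ := by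
  have hδR : MapsTo (infDist · (frontier Ω)) Ω (Ioc 0 R) := fun x hx =>
    ⟨infDist_frontier_pos hΩ hF hx, hR x hx⟩
  rw [← lintegral_hardyWeight_mul hp ((ae_restrict_mem hΩ.measurableSet).mono hδR)
    measurable_infDist.aemeasurable hu.aestronglyMeasurable.aemeasurable]
  refine (isHardyProfile_hardyProfile hp).lintegral_weight_mul_le_of_hasW1p0Gradient
    measurable_hardyWeight hp hΩ (concaveOn_infDist_frontier hΩ hF hconv)
    (lipschitz_infDist_pt _) (fun x hx hd => ?_) hδR hu
  exact norm_fderiv_infDist_eq_one isClosed_frontier hF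
    ((disjoint_frontier_iff_isOpen.2 hΩ).notMem_of_mem_right hx) hd

section EuclideanDomains

variable {n : ℕ} {p : ℝ} {Ω : Set (EuclideanSpace ℝ (Fin n))}

lemma MemW1p0.hasW1p0Gradient (hp : 0 < p) (hΩ : IsOpen Ω) {u : EuclideanSpace ℝ (Fin n) → ℝ}
    (hu : MemW1p0 p Ω u) : HasW1p0Gradient volume p Ω u (fderiv ℝ u) := by
  obtain ⟨⟨huc, -⟩, v, hv, hlim⟩ := hu
  exact
    { aestronglyMeasurable :=
        (huc.mono subset_closure).aestronglyMeasurable hΩ.measurableSet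
      aestronglyMeasurable_gradient := (measurable_fderiv ℝ u).aestronglyMeasurable
      exists_approx := ⟨v, fun j => ⟨(hv j).1.of_le (by exact_mod_cast le_top), (hv j).2⟩,
        tendsto_eLpNorm_zero_of_le hp hlim fun _ => le_self_add,
        tendsto_eLpNorm_zero_of_le hp hlim fun _ => le_add_self⟩ }

lemma sdist_le_inradius (hbd : IsBounded Ω) {x : EuclideanSpace ℝ (Fin n)} (hx : x ∈ Ω) :
    sdist Ω x ≤ inradius Ω :=
  le_csSup ((lipschitz_infDist_pt (frontier Ω)).isBounded_image hbd).bddAbove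
    (mem_image_of_mem _ hx)

end EuclideanDomains

lemma frontier_nonempty_of_isBounded {E : Type*} [NormedAddCommGroup E] [NormedSpace ℝ E]
    [Nontrivial E] {Ω : Set E} (hne : Ω.Nonempty) (hbd : IsBounded Ω) : (frontier Ω).Nonempty :=
  nonempty_frontier_iff.2 ⟨hne, fun h => NormedSpace.unbounded_univ ℝ E (h ▸ hbd)⟩

/-- **Corollary 3.6 (improved Hardy inequality with sharp constant).**
For `Ω ⊂ ℝⁿ` open, bounded, convex with `C²` boundary and `u ∈ W^{1,p}_0(Ω)`:
`∫_Ω |∇u|^p ≥ C_p ∫_Ω |u|^p/δ^p + (p-1) C_p R_in^{-p} ∫_Ω |u|^p`. -/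
theorem hardy_improved_dirichlet (n : ℕ) (hn : 1 ≤ n) (p : ℝ) (hp : 1 < p)
    (Ω : Set (EuclideanSpace ℝ (Fin n))) (hΩ : IsOpen Ω) (hne : Ω.Nonempty)
    (hbd : IsBounded Ω) (hconv : Convex ℝ Ω) (hC2 : HasC2Boundary Ω)
    (u : EuclideanSpace ℝ (Fin n) → ℝ) (hu : MemW1p0 p Ω u) :
    (∫⁻ x in Ω, ENNReal.ofReal (‖fderiv ℝ u x‖ ^ p)) ≥
      ENNReal.ofReal (((p - 1) / p) ^ p) *
          (∫⁻ x in Ω, ENNReal.ofReal (|u x| ^ p / sdist Ω x ^ p)) +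
        ENNReal.ofReal ((p - 1) * ((p - 1) / p) ^ p / inradius Ω ^ p) *
          ∫⁻ x in Ω, ENNReal.ofReal (|u x| ^ p) := by
  have : Nonempty (Fin n) := ⟨⟨0, hn⟩⟩
  exact hardy_improved_dirichlet_general hp hΩ (frontier_nonempty_of_isBounded hne hbd) hconv
    (fun _ => sdist_le_inradius hbd) (hu.hasW1p0Gradient (by linarith) hΩ)

end RobinHardy
end
end

section
/- Let Ω ⊂ ℝ^n be an open bounded convex domain with boundary ∂Ω of class C^2, and for a positive constant σ > 0 let λ_p(Ω,σ) be the Robin–Hardy variational quantity with the constant boundary function σ. Then λ_p(Ω,σ) → C_p = ((p-1)/p)^p as σ → +∞. -/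
open MeasureTheory Metric Set Filter Bornology
open scoped ENNReal Topology

noncomputable section

namespace RobinHardy

/-!
Lower bound. Exhaust the convex domain by polytopes. Each of them splits, up to a null set, into
the cells of points closest to a given facet, and a cell is foliated by segments normal to its
facet along which the height is the distance to the boundary. On such a segment of length `h`,
integrating `(|f| ^ p * (t + α) ^ (1 - p))'` and applying Young's inequality gives the Hardy
inequality `C_p ∫ |f| ^ p / (t + α) ^ p ≤ ∫ |f'| ^ p + C * |f 0| ^ p`, the boundary term at `h`
having the right sign. The choice of `α` makes `C = σ`, so that `C_p ≤ λ_p(Ω, σ)` for every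
`σ > 0`.

Upper bound. Place at a boundary point `y` with an interior tangent ball the test function
`t ^ ((p - 1) / p)`, where `t` is the height over the tangent plane at `y`, cut off in `log t` and
in the tangential variables. It vanishes on `∂Ω`, its gradient is nearly
`((p - 1) / p) * t ^ (-1 / p)` when the logarithmic scale is long, and convexity gives `δ ≤ t`.
The Rayleigh quotient is thus nearly `C_p` once `α` is negligible on the support.
-/

open scoped InnerProductSpace

section OneDimensional

variable {p : ℝ}

theorem mul_mul_rpow_sub_one_le {a x : ℝ} (hp : 1 < p) (ha : 0 ≤ a) (hx : 0 ≤ x) :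
    p * (a * x ^ (p - 1)) ≤ a ^ p + (p - 1) * x ^ p := by
  have hp0 : p ≠ 0 := by linarith
  have hp1 : p - 1 ≠ 0 := by linarith
  have young := Real.young_inequality_of_nonneg ha (Real.rpow_nonneg hx (p - 1))
    (Real.HolderConjugate.conjExponent hp)
  have hpow : (x ^ (p - 1)) ^ p.conjExponent = x ^ p := by
    rw [← Real.rpow_mul hx, Real.conjExponent, mul_div_cancel₀ p hp1]
  rw [hpow] at young
  calc p * (a * x ^ (p - 1)) ≤ p * (a ^ p / p + x ^ p / p.conjExponent) :=
        mul_le_mul_of_nonneg_left young (by linarith)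
    _ = a ^ p + (p - 1) * x ^ p := by
        rw [Real.conjExponent]
        field_simp

theorem abs_rpow_sub_two_mul_self {x : ℝ} (hp : 1 < p) :
    |x| ^ (p - 2) * |x| = |x| ^ (p - 1) := by
  rcases (abs_nonneg x).eq_or_lt with h | h
  · rw [← h, mul_zero, Real.zero_rpow (by linarith)]
  · rw [← Real.rpow_add_one h.ne']
    ring_nf

/-- The right-hand side is the derivative of `-((p - 1) / p) ^ (p - 1) * |f| ^ p * τ ^ (1 - p)`
when `f' = b` and `τ' = 1`. -/
theorem hardy_pointwise {f b τ : ℝ} (hp : 1 < p) (hτ : 0 < τ) :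
    ((p - 1) / p) ^ p * (|f| ^ p / τ ^ p) - |b| ^ p ≤
      -((p - 1) / p) ^ (p - 1) *
        (p * |f| ^ (p - 2) * f * b * τ ^ (1 - p) + |f| ^ p * ((1 - p) * τ ^ (-p))) := by
  have hp0 : 0 < p := by linarith
  have hc0 : 0 < (p - 1) / p := div_pos (by linarith) hp0
  generalize hc : (p - 1) / p = c at hc0 ⊢
  have hX0 : 0 ≤ c * |f| / τ := by positivity
  have hXp : (c * |f| / τ) ^ p = c ^ p * (|f| ^ p / τ ^ p) := by
    rw [Real.div_rpow (by positivity) hτ.le, Real.mul_rpow hc0.le (abs_nonneg f), mul_div_assoc]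
  have hXp1 : (c * |f| / τ) ^ (p - 1) = c ^ (p - 1) * (|f| ^ (p - 1) * τ ^ (1 - p)) := by
    rw [Real.div_rpow (by positivity) hτ.le, Real.mul_rpow hc0.le (abs_nonneg f), mul_div_assoc,
      div_eq_mul_inv (|f| ^ (p - 1)), ← Real.rpow_neg hτ.le, neg_sub]
  have hdiag : c ^ (p - 1) * (|f| ^ p * ((1 - p) * τ ^ (-p))) = -(p * (c * |f| / τ) ^ p) := by
    have hcp : c * p = p - 1 := by rw [← hc, div_mul_cancel₀ _ hp0.ne']
    rw [hXp, Real.rpow_sub_one hc0.ne', Real.rpow_neg hτ.le]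
    field_simp
    linear_combination |f| ^ p * hcp
  have hcross : c ^ (p - 1) * (p * |f| ^ (p - 2) * f * b * τ ^ (1 - p)) ≤
      p * (|b| * (c * |f| / τ) ^ (p - 1)) := by
    refine (le_abs_self _).trans_eq ?_
    rw [hXp1, ← abs_rpow_sub_two_mul_self hp]
    simp only [abs_mul, abs_of_pos hp0, Real.abs_rpow_of_nonneg, hc0.le, hτ.le, abs_nonneg,
      abs_abs, abs_of_pos hc0, abs_of_pos hτ]
    ring
  have young := mul_mul_rpow_sub_one_le hp (abs_nonneg b) hX0
  rw [← hXp]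
  linarith

section Integral

variable {h α : ℝ} {f : ℝ → ℝ}

theorem continuousOn_abs_rpow_div (hp : 0 < p) (hα : 0 < α) (hf : ContinuousOn f (Icc 0 h)) :
    ContinuousOn (fun t => |f t| ^ p / (t + α) ^ p) (Icc 0 h) := by
  have hpos : ∀ t ∈ Icc 0 h, 0 < t + α := fun t ht => by linarith [ht.1]
  refine (hf.abs.rpow_const fun _ _ => Or.inr hp.le).div ?_ fun t ht =>
    (Real.rpow_pos_of_pos (hpos t ht) p).ne'
  exact (continuousOn_id.add continuousOn_const).rpow_const fun t ht => Or.inl (hpos t ht).ne'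

theorem hasDerivAt_abs_rpow_mul_add_rpow {t : ℝ} (hp : 1 < p) (ht : 0 < t + α)
    (hf : DifferentiableAt ℝ f t) :
    HasDerivAt (fun t => |f t| ^ p * (t + α) ^ (1 - p))
      (p * |f t| ^ (p - 2) * f t * deriv f t * (t + α) ^ (1 - p) +
        |f t| ^ p * ((1 - p) * (t + α) ^ (-p))) t := by
  have hweight : HasDerivAt (fun t : ℝ => (t + α) ^ (1 - p)) ((1 - p) * (t + α) ^ (-p)) t := by
    refine (((hasDerivAt_id t).add_const α).rpow_const (p := 1 - p) (Or.inl ht.ne')).congr_deriv ?_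
    rw [one_mul, id_eq, show 1 - p - 1 = -p by ring]
  exact ((hasDerivAt_abs_rpow (f t) hp).comp t hf.hasDerivAt).mul hweight

theorem intervalIntegral_hardy (hp : 1 < p) (hα : 0 < α) (hh : 0 ≤ h)
    (hf : ContinuousOn f (Icc 0 h)) (hdf : ∀ t ∈ Ioo 0 h, DifferentiableAt ℝ f t)
    (hint : IntegrableOn (fun t => |deriv f t| ^ p) (Icc 0 h)) :
    ∫ t in (0 : ℝ)..h, (((p - 1) / p) ^ p * (|f t| ^ p / (t + α) ^ p) - |deriv f t| ^ p) ≤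
      ((p - 1) / p) ^ (p - 1) * α ^ (1 - p) * |f 0| ^ p := by
  have hp0 : 0 < p := by linarith
  have : 0 < (p - 1) / p := div_pos (by linarith) hp0
  have hpos : ∀ t ∈ Icc 0 h, 0 < t + α := fun t ht => by linarith [ht.1]
  have hboundary : 0 ≤ ((p - 1) / p) ^ (p - 1) * (|f h| ^ p * (h + α) ^ (1 - p)) := by
    have := hpos h ⟨hh, le_rfl⟩
    positivity
  refine (intervalIntegral.integral_le_sub_of_hasDeriv_right_of_le hh
    (g := fun t => -((p - 1) / p) ^ (p - 1) * (|f t| ^ p * (t + α) ^ (1 - p)))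
    (continuousOn_const.mul ?_)
    (fun t ht => ((hasDerivAt_abs_rpow_mul_add_rpow hp (hpos t (Ioo_subset_Icc_self ht))
      (hdf t ht)).const_mul _).hasDerivWithinAt)
    ((((continuousOn_abs_rpow_div hp0 hα hf).integrableOn_compact isCompact_Icc).const_mul _).sub
      hint)
    (fun t ht => hardy_pointwise hp (hpos t (Ioo_subset_Icc_self ht)))).trans ?_
  · exact (hf.abs.rpow_const fun _ _ => Or.inr hp0.le).mul
      ((continuousOn_id.add continuousOn_const).rpow_const fun t ht => Or.inl (hpos t ht).ne')
  · simp only [zero_add]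
    linarith

theorem lintegral_hardy (hp : 1 < p) (hα : 0 < α)
    (hf : ContinuousOn f (Icc 0 h)) (hdf : ∀ t ∈ Ioo 0 h, DifferentiableAt ℝ f t) :
    ENNReal.ofReal (((p - 1) / p) ^ p) *
        ∫⁻ t in Ioo 0 h, ENNReal.ofReal (|f t| ^ p / (t + α) ^ p) ≤
      (∫⁻ t in Ioo 0 h, ENNReal.ofReal (|deriv f t| ^ p)) +
        ENNReal.ofReal (((p - 1) / p) ^ (p - 1) * α ^ (1 - p)) * ENNReal.ofReal (|f 0| ^ p) := by
  rcases lt_or_ge h 0 with hh | hh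
  · simp [Ioo_eq_empty (not_lt.2 hh.le)]
  by_cases htop : ∫⁻ t in Ioo 0 h, ENNReal.ofReal (|deriv f t| ^ p) = ∞
  · rw [htop, top_add]
    exact le_top
  have : 0 < (p - 1) / p := div_pos (by linarith) (by linarith)
  have hint' : IntegrableOn (fun t => |f t| ^ p / (t + α) ^ p) (Ioo 0 h) :=
    ((continuousOn_abs_rpow_div (by linarith) hα hf).integrableOn_compact isCompact_Icc).mono_set
      Ioo_subset_Icc_self
  have hnn : 0 ≤ᵐ[volume.restrict (Ioo 0 h)] fun t => |deriv f t| ^ p :=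
    Eventually.of_forall fun t => by positivity
  have hint : IntegrableOn (fun t => |deriv f t| ^ p) (Ioo 0 h) :=
    (lintegral_ofReal_ne_top_iff_integrable
      ((measurable_deriv f).abs.pow_const p).aestronglyMeasurable hnn).1 htop
  have hnn' : 0 ≤ᵐ[volume.restrict (Ioo 0 h)] fun t => |f t| ^ p / (t + α) ^ p := by
    filter_upwards [ae_restrict_mem measurableSet_Ioo] with t ht
    have : 0 < t + α := add_pos ht.1 hα
    positivity
  have hardy := intervalIntegral_hardy hp hα hh hf hdf
    ((integrableOn_Icc_iff_integrableOn_Ioo (by simp) (by simp)).2 hint)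
  rw [intervalIntegral.integral_of_le hh, integral_Ioc_eq_integral_Ioo,
    integral_sub (hint'.const_mul _) hint, integral_const_mul, sub_le_iff_le_add'] at hardy
  rw [← ofReal_integral_eq_lintegral_ofReal hint' hnn',
    ← ofReal_integral_eq_lintegral_ofReal hint hnn, ← ENNReal.ofReal_mul (by positivity),
    ← ENNReal.ofReal_mul (by positivity),
    ← ENNReal.ofReal_add (integral_nonneg_of_ae hnn) (by positivity)]
  exact ENNReal.ofReal_le_ofReal hardy

end Integral
end OneDimensional

section AlphaC

variable {p σ : ℝ}

theorem alphaC_pos (hp : 1 < p) (hσ : 0 < σ) : 0 < alphaC p σ :=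
  mul_pos (div_pos (by linarith) (by linarith)) (Real.rpow_pos_of_pos hσ _)

theorem rpow_mul_alphaC_rpow (hp : 1 < p) (hσ : 0 < σ) :
    ((p - 1) / p) ^ (p - 1) * alphaC p σ ^ (1 - p) = σ := by
  have hc : 0 < (p - 1) / p := div_pos (by linarith) (by linarith)
  have hp1 : 1 - p ≠ 0 := by linarith
  rw [alphaC, Real.mul_rpow hc.le (Real.rpow_nonneg hσ.le _), ← mul_assoc, ← Real.rpow_add hc,
    ← Real.rpow_mul hσ.le, one_div_mul_cancel hp1]
  simp

theorem tendsto_alphaC_atTop (hp : 1 < p) : Tendsto (alphaC p) atTop (𝓝 0) := by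
  have hexp : 0 < -(1 / (1 - p)) := by
    rw [← one_div_neg_eq_neg_one_div]
    exact one_div_pos.2 (by linarith)
  unfold alphaC
  simpa using (tendsto_rpow_neg_atTop hexp).const_mul ((p - 1) / p)

end AlphaC

section Coordinates

variable {E : Type*} [NormedAddCommGroup E] [InnerProductSpace ℝ E] {m : ℕ}
  (b : OrthonormalBasis (Fin (m + 1)) ℝ E)

/-- The coordinates of a vector with respect to all basis vectors except the distinguished one
`b 0`. They live in `Fin m → ℝ`, whose Hausdorff measure is Lebesgue measure. -/
def tailCoord : E →L[ℝ] (Fin m → ℝ) :=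
  ContinuousLinearMap.pi fun j => innerSL ℝ (b j.succ)

/-- The isometric copy of `Fin m → ℝ` inside the orthogonal complement of `b 0`, as a right inverse
of `tailCoord b`. -/
def tailEmbed : (Fin m → ℝ) →L[ℝ] E :=
  ∑ j : Fin m, (ContinuousLinearMap.proj (R := ℝ) (φ := fun _ : Fin m => ℝ) j).smulRight (b j.succ)

theorem tailCoord_apply (x : E) (j : Fin m) : tailCoord b x j = ⟪b j.succ, x⟫_ℝ := rfl

theorem tailEmbed_apply (z : Fin m → ℝ) : tailEmbed b z = ∑ j, z j • b j.succ := by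
  simp [tailEmbed]

theorem norm_tailCoord_le (x : E) : ‖tailCoord b x‖ ≤ ‖x‖ := by
  refine (pi_norm_le_iff_of_nonneg (norm_nonneg x)).2 fun j => ?_
  simpa [tailCoord_apply] using norm_inner_le_norm (𝕜 := ℝ) (b j.succ) x

theorem lipschitzWith_tailCoord : LipschitzWith 1 (tailCoord b) :=
  AddMonoidHomClass.lipschitz_of_bound_nnnorm _ _ fun x => by
    rw [one_mul]
    exact norm_tailCoord_le b x

theorem inner_smul_add_tailEmbed_tailCoord (x : E) :
    ⟪b 0, x⟫_ℝ • b 0 + tailEmbed b (tailCoord b x) = x := by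
  simpa [Fin.sum_univ_succ, tailEmbed_apply, tailCoord_apply] using b.sum_repr' x

theorem tailCoord_zeroth : tailCoord b (b 0) = 0 := by
  ext j
  simp [tailCoord_apply, orthonormal_iff_ite.1 b.orthonormal]

theorem tailCoord_tailEmbed (z : Fin m → ℝ) : tailCoord b (tailEmbed b z) = z := by
  ext j
  simp [tailCoord_apply, tailEmbed_apply, inner_sum, inner_smul_right,
    orthonormal_iff_ite.1 b.orthonormal]

theorem inner_zeroth_tailEmbed (z : Fin m → ℝ) : ⟪b 0, tailEmbed b z⟫_ℝ = 0 := by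
  simp [tailEmbed_apply, inner_sum, inner_smul_right, orthonormal_iff_ite.1 b.orthonormal,
    (Fin.succ_ne_zero _).symm]

theorem tailCoord_smul_add_tailEmbed (t : ℝ) (z : Fin m → ℝ) :
    tailCoord b (t • b 0 + tailEmbed b z) = z := by
  rw [map_add, map_smul, tailCoord_zeroth, tailCoord_tailEmbed, smul_zero, zero_add]

theorem inner_smul_add_tailEmbed (t : ℝ) (z : Fin m → ℝ) :
    ⟪b 0, t • b 0 + tailEmbed b z⟫_ℝ = t := by
  simp [inner_add_right, inner_smul_right, inner_zeroth_tailEmbed]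

theorem lintegral_eq_lintegral_tail [FiniteDimensional ℝ E] [MeasurableSpace E] [BorelSpace E]
    {G : E → ℝ≥0∞} (hG : Measurable G) :
    ∫⁻ x, G x = ∫⁻ z, ∫⁻ t : ℝ, G (t • b 0 + tailEmbed b z) := by
  have hpres := (b.measurePreserving_repr_symm.comp (PiLp.volume_preserving_toLp _)).comp
    (volume_preserving_piFinSuccAbove (fun _ : Fin (m + 1) => ℝ) 0).symm
  rw [← hpres.lintegral_comp hG, Measure.volume_eq_prod,
    lintegral_prod_symm (fun w => G _) (hG.comp hpres.measurable).aemeasurable]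
  refine lintegral_congr fun z => lintegral_congr fun t => congr_arg G ?_
  simp only [Function.comp]
  rw [← b.sum_repr_symm, tailEmbed_apply, Fin.sum_univ_succ]
  simp [MeasurableEquiv.piFinSuccAbove, Fin.insertNthEquiv]

theorem exists_orthonormalBasis_zeroth_eq [FiniteDimensional ℝ E] {ν : E}
    (hE : Module.finrank ℝ E = m + 1) (hν : ‖ν‖ = 1) :
    ∃ b : OrthonormalBasis (Fin (m + 1)) ℝ E, b 0 = ν := by
  obtain ⟨b, hb⟩ := Orthonormal.exists_orthonormalBasis_extension_of_card_eq (ι := Fin (m + 1))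
    (𝕜 := ℝ) (by simpa using hE) (v := fun _ => ν) (s := {0})
    ⟨fun _ => hν, fun i j hij => (hij (Subsingleton.elim i j)).elim⟩
  exact ⟨b, hb 0 rfl⟩

end Coordinates

section Frontier

theorem exists_add_smul_sub_mem_frontier {F : Type*} [NormedAddCommGroup F] [NormedSpace ℝ F]
    {s : Set F} {x y : F} (hx : x ∈ s) (hy : y ∉ s) :
    ∃ t ∈ Icc (0 : ℝ) 1, x + t • (y - x) ∈ frontier s := by
  let γ : unitInterval → F := fun t => x + (t : ℝ) • (y - x)
  have hγ : Continuous γ := by fun_prop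
  have hpre : (frontier (γ ⁻¹' s)).Nonempty := nonempty_frontier_iff.2
    ⟨⟨0, by simpa [γ] using hx⟩, fun h => hy (by simpa [γ] using h.ge (mem_univ 1))⟩
  obtain ⟨t, ht⟩ := hpre
  exact ⟨t, t.2, hγ.frontier_preimage_subset s ht⟩

theorem exists_add_smul_mem_frontier {F : Type*} [NormedAddCommGroup F] [NormedSpace ℝ F]
    {s : Set F} {x v : F} (hs : IsBounded s) (hx : x ∈ s) (hv : v ≠ 0) :
    ∃ t : ℝ, 0 ≤ t ∧ x + t • v ∈ frontier s := by
  obtain ⟨R, hR⟩ := hs.subset_ball x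
  have hR0 : 0 < R := pos_of_mem_ball (hR hx)
  have hout : x + (R / ‖v‖) • v ∉ s := fun h => by
    have := hR h
    simp [norm_smul, abs_of_pos hR0, hv] at this
  obtain ⟨t, ht, hmem⟩ := exists_add_smul_sub_mem_frontier hx hout
  refine ⟨t * (R / ‖v‖), mul_nonneg ht.1 (by positivity), ?_⟩
  rwa [add_sub_cancel_left, smul_smul] at hmem

variable {E : Type*} [NormedAddCommGroup E] [InnerProductSpace ℝ E] {m : ℕ}

theorem exists_norm_eq_one_inner_eq [CompleteSpace E] {f : StrongDual ℝ E} (hf : f ≠ 0) :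
    ∃ ν : E, ‖ν‖ = 1 ∧ ∀ x, f x = ‖f‖ * ⟪ν, x⟫_ℝ := by
  have hf' : ‖f‖ ≠ 0 := norm_ne_zero_iff.2 hf
  refine ⟨‖f‖⁻¹ • (InnerProductSpace.toDual ℝ E).symm f, ?_, fun x => ?_⟩
  · simp [norm_smul, hf']
  · rw [real_inner_smul_left, InnerProductSpace.toDual_symm_apply, mul_inv_cancel_left₀ hf']

theorem exists_supporting_normal [CompleteSpace E] {Ω : Set E} {y : E} (hΩ : IsOpen Ω)
    (hne : Ω.Nonempty) (hconv : Convex ℝ Ω) (hy : y ∈ frontier Ω) :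
    ∃ ν : E, ‖ν‖ = 1 ∧ ∀ x ∈ closure Ω, ⟪ν, x⟫_ℝ ≤ ⟪ν, y⟫_ℝ := by
  obtain ⟨f, hf⟩ := geometric_hahn_banach_open_point hconv hΩ (hΩ.frontier_eq.subset hy).2
  obtain ⟨x₀, hx₀⟩ := hne
  have hf0 : f ≠ 0 := fun h => by simpa [h] using hf x₀ hx₀
  obtain ⟨ν, hν, hfν⟩ := exists_norm_eq_one_inner_eq hf0
  refine ⟨ν, hν, fun x hx => closure_minimal (fun z hz => ?_)
    (isClosed_le (by fun_prop : Continuous fun z => ⟪ν, z⟫_ℝ) continuous_const) hx⟩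
  have := hf z hz
  rw [hfν, hfν] at this
  exact (lt_of_mul_lt_mul_left this (norm_nonneg f)).le

theorem hausdorffMeasure_eq_volume : (μH[m] : Measure (Fin m → ℝ)) = volume := by
  simpa using hausdorffMeasure_pi_real (ι := Fin m)

theorem hausdorffMeasure_lt_top_of_antilipschitz {X : Type*} [MetricSpace X] [MeasurableSpace X]
    [BorelSpace X] {s : Set X} {T : X → Fin m → ℝ} {K : NNReal}
    (hT : AntilipschitzWith K (s.domRestrict T)) (hb : IsBounded (T '' s)) : μH[m] s < ∞ := by
  have hs : μH[m] s = μH[m] (univ : Set s) := by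
    simpa using (isometry_subtype_coe (s := s)).hausdorffMeasure_image (d := m)
      (Or.inl m.cast_nonneg) univ
  have himage : μH[m] (s.domRestrict T '' univ) < ∞ := by
    rw [image_univ, range_domRestrict, hausdorffMeasure_eq_volume]
    exact hb.measure_lt_top
  rw [hs]
  refine (hT.le_hausdorffMeasure_image m.cast_nonneg univ).trans_lt (ENNReal.mul_lt_top ?_ himage)
  exact ENNReal.rpow_lt_top_of_nonneg m.cast_nonneg ENNReal.coe_ne_top

variable {b : OrthonormalBasis (Fin (m + 1)) ℝ E}

theorem inner_le_two_mul_norm_tailEmbed {ν v : E} (hν : ‖ν‖ = 1) (hb : 1 / 2 < ⟪b 0, ν⟫_ℝ)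
    (hv : ⟪ν, v⟫_ℝ ≤ 0) : ⟪b 0, v⟫_ℝ ≤ 2 * ‖tailEmbed b (tailCoord b v)‖ := by
  have hsplit : ⟪ν, v⟫_ℝ = ⟪b 0, v⟫_ℝ * ⟪b 0, ν⟫_ℝ + ⟪ν, tailEmbed b (tailCoord b v)⟫_ℝ := by
    conv_lhs => rw [← inner_smul_add_tailEmbed_tailCoord b v]
    rw [inner_add_right, inner_smul_right, real_inner_comm ν]
  have htail : |⟪ν, tailEmbed b (tailCoord b v)⟫_ℝ| ≤ ‖tailEmbed b (tailCoord b v)‖ := by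
    simpa [hν] using abs_real_inner_le_norm ν (tailEmbed b (tailCoord b v))
  rcases le_total ⟪b 0, v⟫_ℝ 0 with h | h
  · linarith [norm_nonneg (tailEmbed b (tailCoord b v))]
  · nlinarith [neg_le_of_abs_le htail]

theorem norm_le_three_mul_norm_tailEmbed {ν ν' v : E} (hν : ‖ν‖ = 1) (hν' : ‖ν'‖ = 1)
    (hb : 1 / 2 < ⟪b 0, ν⟫_ℝ) (hb' : 1 / 2 < ⟪b 0, ν'⟫_ℝ) (hv : ⟪ν, v⟫_ℝ ≤ 0)
    (hv' : 0 ≤ ⟪ν', v⟫_ℝ) : ‖v‖ ≤ 3 * ‖tailEmbed b (tailCoord b v)‖ := by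
  have hle := inner_le_two_mul_norm_tailEmbed hν hb hv
  have hge := inner_le_two_mul_norm_tailEmbed hν' hb' (v := -v) (by simpa using hv')
  have habs : |⟪b 0, v⟫_ℝ| ≤ 2 * ‖tailEmbed b (tailCoord b v)‖ :=
    abs_le'.2 ⟨hle, by simpa using hge⟩
  calc ‖v‖ = ‖⟪b 0, v⟫_ℝ • b 0 + tailEmbed b (tailCoord b v)‖ := by
        rw [inner_smul_add_tailEmbed_tailCoord]
    _ ≤ |⟪b 0, v⟫_ℝ| + ‖tailEmbed b (tailCoord b v)‖ := by
        simpa [norm_smul] using norm_add_le (⟪b 0, v⟫_ℝ • b 0) (tailEmbed b (tailCoord b v))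
    _ ≤ 3 * ‖tailEmbed b (tailCoord b v)‖ := by linarith

/-- The boundary points of `Ω` having an outer unit normal within `60°` of `e`. -/
def frontierCap (Ω : Set E) (e : E) : Set E :=
  {y ∈ frontier Ω | ∃ ν, ‖ν‖ = 1 ∧ 1 / 2 < ⟪e, ν⟫_ℝ ∧ ∀ x ∈ closure Ω, ⟪ν, x⟫_ℝ ≤ ⟪ν, y⟫_ℝ}

variable {Ω : Set E}

theorem antilipschitzWith_tailCoord_frontierCap :
    AntilipschitzWith (3 * ‖tailEmbed b‖₊) ((frontierCap Ω (b 0)).domRestrict (tailCoord b)) := by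
  refine AntilipschitzWith.of_le_mul_dist ?_
  rintro ⟨x, hx, νx, hνx, hbx, hsx⟩ ⟨y, hy, νy, hνy, hby, hsy⟩
  have hxy : ⟪νy, x - y⟫_ℝ ≤ 0 := by
    rw [inner_sub_right]
    exact sub_nonpos.2 (hsy x (frontier_subset_closure hx))
  have hyx : 0 ≤ ⟪νx, x - y⟫_ℝ := by
    rw [inner_sub_right]
    exact sub_nonneg.2 (hsx y (frontier_subset_closure hy))
  calc dist x y = ‖x - y‖ := dist_eq_norm x y
    _ ≤ 3 * ‖tailEmbed b (tailCoord b (x - y))‖ :=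
        norm_le_three_mul_norm_tailEmbed hνy hνx hby hbx hxy hyx
    _ ≤ 3 * (‖tailEmbed b‖ * ‖tailCoord b (x - y)‖) := by
        gcongr
        exact (tailEmbed b).le_opNorm _
    _ = 3 * ‖tailEmbed b‖ * dist (tailCoord b x) (tailCoord b y) := by
        rw [map_sub, dist_eq_norm, mul_assoc]

theorem hausdorffMeasure_frontierCap_lt_top [FiniteDimensional ℝ E] [MeasurableSpace E]
    [BorelSpace E] {e : E} (hE : Module.finrank ℝ E = m + 1) (hΩ : IsBounded Ω) (he : ‖e‖ = 1) :
    μH[m] (frontierCap Ω e) < ∞ := by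
  obtain ⟨b, rfl⟩ := exists_orthonormalBasis_zeroth_eq hE he
  refine hausdorffMeasure_lt_top_of_antilipschitz antilipschitzWith_tailCoord_frontierCap ?_
  have hsub : frontierCap Ω (b 0) ⊆ closure Ω := fun y hy => frontier_subset_closure hy.1
  exact (tailCoord b).lipschitz.isBounded_image (hΩ.closure.subset hsub)

theorem exists_finset_forall_half_lt_inner [FiniteDimensional ℝ E] :
    ∃ t : Finset E, (∀ e ∈ t, ‖e‖ = 1) ∧ ∀ ν : E, ‖ν‖ = 1 → ∃ e ∈ t, 1 / 2 < ⟪e, ν⟫_ℝ := by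
  obtain ⟨t, ht, hcover⟩ := (isCompact_sphere (0 : E) 1).elim_nhds_subcover
    (fun e => {ν | 1 / 2 < ⟪e, ν⟫_ℝ}) fun e he =>
      (isOpen_lt continuous_const (by fun_prop)).mem_nhds <| by
        rw [mem_sphere_zero_iff_norm] at he
        norm_num [he]
  exact ⟨t, fun e he => by simpa using ht e he,
    fun ν hν => by simpa using hcover (by simpa using hν : ν ∈ sphere (0 : E) 1)⟩

theorem hausdorffMeasure_frontier_lt_top [FiniteDimensional ℝ E] [MeasurableSpace E]
    [BorelSpace E] (hE : Module.finrank ℝ E = m + 1) (hΩ : IsOpen Ω) (hne : Ω.Nonempty)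
    (hbd : IsBounded Ω) (hconv : Convex ℝ Ω) : μH[m] (frontier Ω) < ∞ := by
  obtain ⟨t, ht, hcover⟩ := exists_finset_forall_half_lt_inner (E := E)
  have hsub : frontier Ω ⊆ ⋃ e ∈ t, frontierCap Ω e := fun y hy => by
    obtain ⟨ν, hν, hsupp⟩ := exists_supporting_normal hΩ hne hconv hy
    obtain ⟨e, he, hlt⟩ := hcover ν hν
    exact mem_iUnion₂.2 ⟨e, he, hy, ν, hν, hlt, hsupp⟩
  exact (measure_mono hsub).trans_lt <| measure_biUnion_lt_top t.finite_toSet fun e he =>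
    hausdorffMeasure_frontierCap_lt_top hE hbd (ht e he)

end Frontier

section Cells

variable {E : Type*} [NormedAddCommGroup E] [InnerProductSpace ℝ E]

/-- The signed distance from `x` to the boundary of the half-space `{x | ⟪ν, x⟫ ≤ c}` with unit
outer normal `ν`, positive inside. -/
def depth (ν : E) (c : ℝ) (x : E) : ℝ := c - ⟪ν, x⟫_ℝ

variable {ν : E} {c : ℝ}

theorem continuous_depth : Continuous (depth ν c) := by
  unfold depth
  fun_prop

theorem depth_add_smul (ν' x : E) (t : ℝ) :
    depth ν c (x + t • ν') = depth ν c x - t * ⟪ν, ν'⟫_ℝ := by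
  rw [depth, depth, inner_add_right, inner_smul_right, sub_sub]

theorem depth_sub_smul (ν' x : E) (t : ℝ) :
    depth ν c (x - t • ν') = depth ν c x + t * ⟪ν, ν'⟫_ℝ := by
  rw [sub_eq_add_neg, ← neg_smul, depth_add_smul, neg_mul, sub_neg_eq_add]

theorem depth_add_depth_smul (hν : ‖ν‖ = 1) (x : E) : depth ν c (x + depth ν c x • ν) = 0 := by
  rw [depth_add_smul, real_inner_self_eq_norm_sq, hν]
  ring

theorem abs_depth_sub_depth_le_dist (hν : ‖ν‖ = 1) (x y : E) :
    |depth ν c x - depth ν c y| ≤ dist x y := by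
  have h : depth ν c x - depth ν c y = ⟪ν, y - x⟫_ℝ := by
    rw [depth, depth, inner_sub_right]
    ring
  simpa [h, hν, dist_eq_norm'] using abs_real_inner_le_norm ν (y - x)

variable {ι : Type*} (ν : ι → E) (c : ι → ℝ)

/-- The part of the polytope `⋂ j, {x | 0 < depth (ν j) (c j) x}` lying strictly closer to its
`i`-th bounding hyperplane than to the others. -/
def cell (i : ι) : Set E :=
  {x | 0 < depth (ν i) (c i) x ∧ ∀ j ≠ i, depth (ν i) (c i) x < depth (ν j) (c j) x}

/-- The relatively open `i`-th facet of the polytope `⋂ j, {x | 0 ≤ depth (ν j) (c j) x}`. -/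
def face (i : ι) : Set E :=
  {x | depth (ν i) (c i) x = 0 ∧ ∀ j ≠ i, 0 < depth (ν j) (c j) x}

/-- The points of `S` on the outer side of the `i`-th facet whose orthogonal projection to the
`i`-th bounding hyperplane falls in the facet. -/
def shadow (S : Set E) (i : ι) : Set E :=
  {y ∈ S | depth (ν i) (c i) y ≤ 0 ∧ y + depth (ν i) (c i) y • ν i ∈ face ν c i}

variable {ν c} {i j : ι}

theorem depth_nonneg_of_mem_cell {x : E} (hx : x ∈ cell ν c i) (j : ι) :
    0 ≤ depth (ν j) (c j) x := by
  rcases eq_or_ne j i with rfl | hj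
  · exact hx.1.le
  · exact (hx.1.trans (hx.2 j hj)).le

theorem depth_nonneg_of_mem_face {x : E} (hx : x ∈ face ν c i) (j : ι) :
    0 ≤ depth (ν j) (c j) x := by
  rcases eq_or_ne j i with rfl | hj
  · exact hx.1.ge
  · exact (hx.2 j hj).le

theorem isOpen_cell [Finite ι] : IsOpen (cell ν c i) := by
  simp only [cell, ofPred_and, ofPred_forall]
  exact (isOpen_lt continuous_const continuous_depth).inter
    (isOpen_iInter_of_finite fun j => isOpen_iInter_of_finite fun _ =>
      isOpen_lt continuous_depth continuous_depth)

theorem measurableSet_face [Finite ι] [MeasurableSpace E] [BorelSpace E] :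
    MeasurableSet (face ν c i) := by
  simp only [face, ofPred_and, ofPred_forall]
  exact (isClosed_eq continuous_depth continuous_const).measurableSet.inter
    (isOpen_iInter_of_finite fun j => isOpen_iInter_of_finite fun _ =>
      isOpen_lt continuous_const continuous_depth).measurableSet

theorem measurableSet_shadow [Finite ι] [MeasurableSpace E] [BorelSpace E] {S : Set E}
    (hS : MeasurableSet S) : MeasurableSet (shadow ν c S i) := by
  have hfoot : Continuous fun y => y + depth (ν i) (c i) y • ν i :=
    continuous_id.add (continuous_depth.smul continuous_const)
  exact hS.inter ((isClosed_le continuous_depth continuous_const).measurableSet.inter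
    (hfoot.measurable measurableSet_face))

theorem add_depth_smul_mem_face (hν : ∀ i, ‖ν i‖ = 1) {x : E} (hx : x ∈ cell ν c i) :
    x + depth (ν i) (c i) x • ν i ∈ face ν c i := by
  refine ⟨depth_add_depth_smul (hν i) x, fun j hj => ?_⟩
  rw [depth_add_smul]
  nlinarith [hx.1, hx.2 j hj, real_inner_le_one_of_norm_eq_one (hν j) (hν i)]

theorem sub_smul_mem_cell_of_le (hν : ∀ i, ‖ν i‖ = 1) {y : E} (hy : y ∈ face ν c i) {s t : ℝ}
    (ht : y - t • ν i ∈ cell ν c i) (hs : 0 < s) (hst : s ≤ t) : y - s • ν i ∈ cell ν c i := by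
  have hself : ⟪ν i, ν i⟫_ℝ = 1 := by rw [real_inner_self_eq_norm_sq, hν, one_pow]
  simp only [cell, mem_ofPred_eq, depth_sub_smul, hy.1, hself] at ht ⊢
  refine ⟨by linarith, fun j hj => ?_⟩
  nlinarith [ht.2 j hj, real_inner_le_one_of_norm_eq_one (hν j) (hν i)]

theorem pairwise_disjoint_cell : Pairwise fun i j => Disjoint (cell ν c i) (cell ν c j) :=
  fun i j hij => disjoint_left.2 fun _ hi hj =>
    (hi.2 j hij.symm).asymm (hj.2 i hij)

theorem depth_lt_depth_of_mem_shadow (hν : ∀ i, ‖ν i‖ = 1) {S : Set E} {y : E}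
    (hy : y ∈ shadow ν c S i) (hj : j ≠ i) : depth (ν i) (c i) y < depth (ν j) (c j) y := by
  have := hy.2.2.2 j hj
  rw [depth_add_smul] at this
  nlinarith [hy.2.1, real_inner_le_one_of_norm_eq_one (hν j) (hν i)]

theorem pairwise_disjoint_shadow (hν : ∀ i, ‖ν i‖ = 1) (S : Set E) :
    Pairwise fun i j => Disjoint (shadow ν c S i) (shadow ν c S j) :=
  fun _ _ hij => disjoint_left.2 fun _ hi hj =>
    (depth_lt_depth_of_mem_shadow hν hi hij.symm).asymm (depth_lt_depth_of_mem_shadow hν hj hij)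

/-- The length of the segment in which the normal line through `y` meets the `i`-th cell. -/
def cellHeight (ν : ι → E) (c : ι → ℝ) (i : ι) (y : E) : ℝ :=
  sSup {t : ℝ | y - t • ν i ∈ cell ν c i}

theorem eq_Ioo_sSup {S : Set ℝ} (ho : IsOpen S) (hb : BddAbove S) (hpos : S ⊆ Ioi 0)
    (hdown : ∀ t ∈ S, ∀ s, 0 < s → s ≤ t → s ∈ S) : S = Ioo 0 (sSup S) := by
  refine Subset.antisymm (fun t ht => ⟨hpos ht, ?_⟩) fun t ht => ?_
  · obtain ⟨s, hs, hsub⟩ :=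
      mem_nhdsGE_iff_exists_Icc_subset.1 (mem_nhdsWithin_of_mem_nhds (ho.mem_nhds ht))
    exact lt_of_lt_of_le hs (le_csSup hb (hsub (right_mem_Icc.2 (le_of_lt hs))))
  · have hne : S.Nonempty := by
      by_contra h
      rw [not_nonempty_iff_eq_empty.1 h, Real.sSup_empty] at ht
      exact (ht.1.trans ht.2).false
    obtain ⟨s, hs, hts⟩ := exists_lt_of_lt_csSup hne ht.2
    exact hdown s hs t ht.1 hts.le

theorem bddAbove_sub_smul_mem {P : Set E} {ν : E} (hP : IsBounded P) (hν : ν ≠ 0) (y : E) :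
    BddAbove {t : ℝ | y - t • ν ∈ P} := by
  obtain ⟨D, hD⟩ := hP.subset_closedBall y
  refine ⟨D / ‖ν‖, fun t ht => (le_div_iff₀ (norm_pos_iff.2 hν)).2 ?_⟩
  have hdist : |t| * ‖ν‖ ≤ D := by simpa [dist_eq_norm, norm_smul] using hD ht
  exact (mul_le_mul_of_nonneg_right (le_abs_self t) (norm_nonneg ν)).trans hdist

theorem sub_smul_mem_cell_iff [Finite ι] (hν : ∀ i, ‖ν i‖ = 1) (hb : IsBounded (cell ν c i))
    {y : E} (hy : y ∈ face ν c i) (t : ℝ) :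
    y - t • ν i ∈ cell ν c i ↔ t ∈ Ioo 0 (cellHeight ν c i y) := by
  have hfib : {t : ℝ | y - t • ν i ∈ cell ν c i} = Ioo 0 (cellHeight ν c i y) := by
    refine eq_Ioo_sSup (isOpen_cell.preimage (by fun_prop)) (bddAbove_sub_smul_mem hb ?_ y)
      (fun t ht => ?_) fun t ht s hs hst => sub_smul_mem_cell_of_le hν hy ht hs hst
    · exact norm_ne_zero_iff.1 (by simp [hν])
    · have := ht.1
      rwa [depth_sub_smul, hy.1, real_inner_self_eq_norm_sq, hν, one_pow, mul_one, zero_add] at this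
  exact Set.ext_iff.1 hfib t

theorem mem_face_of_sub_smul_mem_cell (hν : ∀ i, ‖ν i‖ = 1) {y : E} {t : ℝ}
    (hy : depth (ν i) (c i) y = 0) (ht : y - t • ν i ∈ cell ν c i) : y ∈ face ν c i := by
  have := add_depth_smul_mem_face hν ht
  rwa [depth_sub_smul, hy, real_inner_self_eq_norm_sq, hν, one_pow, mul_one, zero_add,
    sub_add_cancel] at this

theorem depth_sub_smul_nonneg_of_mem_Icc [Finite ι] (hν : ∀ i, ‖ν i‖ = 1)
    (hb : IsBounded (cell ν c i)) {y : E} (hy : y ∈ face ν c i) {t : ℝ}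
    (ht : t ∈ Icc 0 (cellHeight ν c i y)) (j : ι) : 0 ≤ depth (ν j) (c j) (y - t • ν i) := by
  rcases (ht.1.trans ht.2).eq_or_lt with h | h
  · obtain rfl : t = 0 := le_antisymm (h ▸ ht.2) ht.1
    simpa using depth_nonneg_of_mem_face hy j
  · rw [← closure_Ioo h.ne] at ht
    have hclosed : IsClosed {s : ℝ | 0 ≤ depth (ν j) (c j) (y - s • ν i)} :=
      isClosed_le continuous_const (continuous_depth.comp (by fun_prop))
    exact closure_minimal (fun s hs => depth_nonneg_of_mem_cell
      ((sub_smul_mem_cell_iff hν hb hy s).2 hs) j) hclosed ht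

end Cells

section CellHardy

variable {E : Type*} [NormedAddCommGroup E] [InnerProductSpace ℝ E] {p α h : ℝ} {u : E → ℝ}

theorem lintegral_hardy_segment {ν y : E} (hp : 1 < p) (hα : 0 < α) (hν : ‖ν‖ = 1)
    (hu : ∀ t ∈ Icc 0 h, DifferentiableAt ℝ u (y - t • ν)) :
    ENNReal.ofReal (((p - 1) / p) ^ p) *
        ∫⁻ t in Ioo 0 h, ENNReal.ofReal (|u (y - t • ν)| ^ p / (t + α) ^ p) ≤
      (∫⁻ t in Ioo 0 h, ENNReal.ofReal (‖fderiv ℝ u (y - t • ν)‖ ^ p)) +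
        ENNReal.ofReal (((p - 1) / p) ^ (p - 1) * α ^ (1 - p)) * ENNReal.ofReal (|u y| ^ p) := by
  have hline : ∀ t, HasDerivAt (fun t : ℝ => y - t • ν) (-ν) t := fun t => by
    simpa using ((hasDerivAt_id t).smul_const ν).const_sub y
  have hderiv : ∀ t ∈ Icc 0 h, HasDerivAt (fun t => u (y - t • ν))
      (fderiv ℝ u (y - t • ν) (-ν)) t := fun t ht =>
    (hu t ht).hasFDerivAt.comp_hasDerivAt t (hline t)
  have hardy := lintegral_hardy (f := fun t => u (y - t • ν)) hp hα
    (fun t ht => (hderiv t ht).continuousAt.continuousWithinAt)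
    fun t ht => (hderiv t (Ioo_subset_Icc_self ht)).differentiableAt
  simp only [zero_smul, sub_zero] at hardy
  refine hardy.trans (add_le_add_left (setLIntegral_mono' measurableSet_Ioo fun t ht => ?_) _)
  rw [(hderiv t (Ioo_subset_Icc_self ht)).deriv, ← Real.norm_eq_abs]
  refine ENNReal.ofReal_le_ofReal (Real.rpow_le_rpow (norm_nonneg _) ?_ (by linarith))
  simpa [hν] using (fderiv ℝ u (y - t • ν)).le_opNorm (-ν)

variable {ι : Type*} {ν : ι → E} {c : ι → ℝ} {i : ι} {Ω : Set E} {m : ℕ}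
  {b : OrthonormalBasis (Fin (m + 1)) ℝ E}

theorem smul_add_tailEmbed_tailCoord (hb : b 0 = ν i) (y : E) :
    c i • ν i + tailEmbed b (tailCoord b y) = y + depth (ν i) (c i) y • ν i := by
  conv_rhs => enter [1]; rw [← inner_smul_add_tailEmbed_tailCoord b y]
  rw [hb, depth, sub_smul]
  abel

theorem preimage_face_subset_tailCoord_image_shadow (hν : ∀ i, ‖ν i‖ = 1) (hb : b 0 = ν i)
    (hbd : IsBounded Ω) (hΩ : ∀ x, (∀ j, 0 ≤ depth (ν j) (c j) x) → x ∈ Ω) :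
    (fun z => c i • ν i + tailEmbed b z) ⁻¹' face ν c i ⊆
      tailCoord b '' shadow ν c (frontier Ω) i := by
  intro z hz
  obtain ⟨t, ht, hmem⟩ := exists_add_smul_mem_frontier hbd (hΩ _ (depth_nonneg_of_mem_face hz))
    (norm_ne_zero_iff.1 (by simp [hν]) : ν i ≠ 0)
  have hdepth : depth (ν i) (c i) (c i • ν i + tailEmbed b z + t • ν i) = -t := by
    rw [depth_add_smul, hz.1, real_inner_self_eq_norm_sq, hν, one_pow, mul_one, zero_sub]
  refine ⟨_, ⟨hmem, by simpa [hdepth] using ht, ?_⟩, ?_⟩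
  · simpa [hdepth] using hz
  · rw [map_add, map_smul, ← hb, tailCoord_zeroth, smul_zero, add_zero,
      tailCoord_smul_add_tailEmbed]

variable [Finite ι] [FiniteDimensional ℝ E] [MeasurableSpace E] [BorelSpace E]

theorem setLIntegral_cell (hν : ∀ i, ‖ν i‖ = 1) (hcell : IsBounded (cell ν c i)) (hb : b 0 = ν i)
    {G : E → ℝ≥0∞} (hG : Measurable G) :
    ∫⁻ x in cell ν c i, G x =
      ∫⁻ z in (fun z => c i • ν i + tailEmbed b z) ⁻¹' face ν c i,
        ∫⁻ t in Ioo 0 (cellHeight ν c i (c i • ν i + tailEmbed b z)),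
          G (c i • ν i + tailEmbed b z - t • ν i) := by
  have hmeas : MeasurableSet (cell ν c i) := isOpen_cell.measurableSet
  have hpre : MeasurableSet ((fun z => c i • ν i + tailEmbed b z) ⁻¹' face ν c i) :=
    measurableSet_face.preimage (by fun_prop)
  rw [← lintegral_indicator hmeas, lintegral_eq_lintegral_tail b (hG.indicator hmeas),
    ← lintegral_indicator hpre]
  refine lintegral_congr fun z => ?_
  have hdepth : depth (ν i) (c i) (c i • ν i + tailEmbed b z) = 0 := by
    rw [← hb, depth, inner_smul_add_tailEmbed, sub_self]
  rw [← lintegral_sub_left_eq_self _ (c i)]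
  simp only [hb, sub_smul, sub_add_eq_add_sub]
  by_cases hz : z ∈ (fun z => c i • ν i + tailEmbed b z) ⁻¹' face ν c i
  · rw [indicator_of_mem hz, ← lintegral_indicator measurableSet_Ioo]
    simp only [indicator, sub_smul_mem_cell_iff hν hcell hz]
  · rw [indicator_of_notMem hz]
    simp [fun t => indicator_of_notMem (f := G)
      (fun ht => hz (mem_face_of_sub_smul_mem_cell (t := t) hν hdepth ht))]

theorem lintegral_hardy_cell (hp : 1 < p) (hα : 0 < α) (hν : ∀ i, ‖ν i‖ = 1)
    (hcell : IsBounded (cell ν c i)) (hb : b 0 = ν i) (hu : Measurable u)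
    (hdiff : ∀ x, (∀ j, 0 ≤ depth (ν j) (c j) x) → DifferentiableAt ℝ u x) :
    ENNReal.ofReal (((p - 1) / p) ^ p) *
        ∫⁻ x in cell ν c i, ENNReal.ofReal (|u x| ^ p / (depth (ν i) (c i) x + α) ^ p) ≤
      (∫⁻ x in cell ν c i, ENNReal.ofReal (‖fderiv ℝ u x‖ ^ p)) +
        ENNReal.ofReal (((p - 1) / p) ^ (p - 1) * α ^ (1 - p)) *
          ∫⁻ z in (fun z => c i • ν i + tailEmbed b z) ⁻¹' face ν c i,
            ENNReal.ofReal (|u (c i • ν i + tailEmbed b z)| ^ p) := by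
  have hdepth : Measurable (depth (ν i) (c i)) := continuous_depth.measurable
  rw [setLIntegral_cell hν hcell hb (by fun_prop), setLIntegral_cell hν hcell hb (by fun_prop),
    ← lintegral_const_mul' _ _ ENNReal.ofReal_ne_top,
    ← lintegral_const_mul' _ _ ENNReal.ofReal_ne_top, ← lintegral_add_right _ (by fun_prop)]
  refine setLIntegral_mono' (measurableSet_face.preimage (by fun_prop)) fun z hz => ?_
  have hd : ∀ t, depth (ν i) (c i) (c i • ν i + tailEmbed b z - t • ν i) = t := fun t => by
    rw [depth_sub_smul, hz.1, real_inner_self_eq_norm_sq, hν, one_pow, mul_one, zero_add]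
  simp only [hd]
  exact lintegral_hardy_segment hp hα (hν i) fun t ht =>
    hdiff _ (depth_sub_smul_nonneg_of_mem_Icc hν hcell hz ht)

theorem setLIntegral_le_setLIntegral_hausdorffMeasure {X : Type*} [EMetricSpace X]
    [MeasurableSpace X] [BorelSpace X] {κ : X → Fin m → ℝ} (hκ : LipschitzWith 1 κ)
    {A : Set (Fin m → ℝ)} {S : Set X} (hS : MeasurableSet S) (hA : A ⊆ κ '' S)
    {g : (Fin m → ℝ) → ℝ≥0∞} (hg : Measurable g) {w : X → ℝ≥0∞} (hw : ∀ y ∈ S, g (κ y) ≤ w y) :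
    ∫⁻ z in A, g z ≤ ∫⁻ y in S, w y ∂μH[m] := by
  have hmap : volume.restrict A ≤ (μH[m].restrict S).map κ := Measure.le_iff.2 fun B hB => by
    rw [Measure.restrict_apply hB, Measure.map_apply hκ.continuous.measurable hB,
      Measure.restrict_apply (hκ.continuous.measurable hB), ← hausdorffMeasure_eq_volume]
    have himage : B ∩ A ⊆ κ '' (κ ⁻¹' B ∩ S) := by
      rintro _ ⟨hB, hzA⟩
      obtain ⟨y, hy, rfl⟩ := hA hzA
      exact ⟨y, ⟨hB, hy⟩, rfl⟩
    exact (measure_mono himage).trans (by simpa using hκ.hausdorffMeasure_image_le m.cast_nonneg _)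
  calc ∫⁻ z in A, g z ≤ ∫⁻ z, g z ∂(μH[m].restrict S).map κ := lintegral_mono' hmap le_rfl
    _ = ∫⁻ y in S, g (κ y) ∂μH[m] := lintegral_map hg hκ.continuous.measurable
    _ ≤ ∫⁻ y in S, w y ∂μH[m] := setLIntegral_mono' hS hw

theorem lintegral_hardy_cell_le_shadow (hE : Module.finrank ℝ E = m + 1) (hp : 1 < p) (hα : 0 < α)
    (hν : ∀ i, ‖ν i‖ = 1) (hbd : IsBounded Ω)
    (hΩ : ∀ x, (∀ j, 0 ≤ depth (ν j) (c j) x) → x ∈ Ω) (hu : Measurable u)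
    (hdiff : ∀ x ∈ Ω, DifferentiableAt ℝ u x) {w : E → ℝ≥0∞}
    (hw : ∀ y ∈ shadow ν c (frontier Ω) i,
      ENNReal.ofReal (|u (y + depth (ν i) (c i) y • ν i)| ^ p) ≤ w y) :
    ENNReal.ofReal (((p - 1) / p) ^ p) *
        ∫⁻ x in cell ν c i, ENNReal.ofReal (|u x| ^ p / (depth (ν i) (c i) x + α) ^ p) ≤
      (∫⁻ x in cell ν c i, ENNReal.ofReal (‖fderiv ℝ u x‖ ^ p)) +
        ENNReal.ofReal (((p - 1) / p) ^ (p - 1) * α ^ (1 - p)) *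
          ∫⁻ y in shadow ν c (frontier Ω) i, w y ∂μH[m] := by
  obtain ⟨b, hb⟩ := exists_orthonormalBasis_zeroth_eq hE (hν i)
  have hcell : IsBounded (cell ν c i) := hbd.subset fun x hx => hΩ x (depth_nonneg_of_mem_cell hx)
  refine (lintegral_hardy_cell hp hα hν hcell hb hu fun x hx => hdiff x (hΩ x hx)).trans ?_
  gcongr
  refine setLIntegral_le_setLIntegral_hausdorffMeasure (lipschitzWith_tailCoord b)
    (measurableSet_shadow isClosed_frontier.measurableSet)
    (preimage_face_subset_tailCoord_image_shadow hν hb hbd hΩ)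
    (by fun_prop) fun y hy => ?_
  rw [smul_add_tailEmbed_tailCoord hb]
  exact hw y hy

end CellHardy

section Polytope

variable {E : Type*} [NormedAddCommGroup E] [InnerProductSpace ℝ E]

theorem nonempty_frontier_of_isBounded {F : Type*} [NormedAddCommGroup F] [NormedSpace ℝ F]
    [Nontrivial F] {s : Set F} (hs : IsBounded s) (hne : s.Nonempty) : (frontier s).Nonempty := by
  obtain ⟨v, hv⟩ := exists_ne (0 : F)
  obtain ⟨x, hx⟩ := hne
  obtain ⟨t, -, ht⟩ := exists_add_smul_mem_frontier hs hx hv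
  exact ⟨_, ht⟩

theorem exists_depth_pos_and_depth_neg [CompleteSpace E] {K : Set E} {y : E} (hK : IsClosed K)
    (hKconv : Convex ℝ K) (hne : K.Nonempty) (hy : y ∉ K) :
    ∃ q : E × ℝ, ‖q.1‖ = 1 ∧ (∀ x ∈ K, 0 < depth q.1 q.2 x) ∧ depth q.1 q.2 y < 0 := by
  obtain ⟨f, a, hfK, hfy⟩ := geometric_hahn_banach_closed_point hKconv hK hy
  have hf : f ≠ 0 := by
    rintro rfl
    obtain ⟨x, hx⟩ := hne
    exact (hfK x hx).not_gt (by simpa using hfy)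
  obtain ⟨ν, hν, hfν⟩ := exists_norm_eq_one_inner_eq hf
  have hf0 : 0 < ‖f‖ := norm_pos_iff.2 hf
  refine ⟨(ν, a / ‖f‖), hν, fun x hx => sub_pos.2 ?_, sub_neg.2 ?_⟩
  · rw [lt_div_iff₀' hf0, ← hfν]
    exact hfK x hx
  · rw [div_lt_iff₀' hf0, ← hfν]
    exact hfy

theorem exists_finset_depth [FiniteDimensional ℝ E] {Ω K : Set E} (hΩ : IsOpen Ω)
    (hbd : IsBounded Ω) (hK : IsCompact K) (hKconv : Convex ℝ K) (hne : K.Nonempty)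
    (hKΩ : K ⊆ Ω) :
    ∃ T : Finset (E × ℝ), (∀ q ∈ T, ‖q.1‖ = 1) ∧ (∀ q ∈ T, ∀ x ∈ K, 0 < depth q.1 q.2 x) ∧
      ∀ x, (∀ q ∈ T, 0 ≤ depth q.1 q.2 x) → x ∈ Ω := by
  classical
  choose! q hqnorm hqK hqneg using fun y (hy : y ∈ frontier Ω) =>
    exists_depth_pos_and_depth_neg hK.isClosed hKconv hne
      fun hyK => (hΩ.frontier_eq.subset hy).2 (hKΩ hyK)
  have hcpt : IsCompact (frontier Ω) :=
    hbd.isCompact_closure.of_isClosed_subset isClosed_frontier frontier_subset_closure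
  obtain ⟨t, ht, hcover⟩ := hcpt.elim_nhds_subcover (fun y => {x | depth (q y).1 (q y).2 x < 0})
    fun y hy => (isOpen_lt continuous_depth continuous_const).mem_nhds (hqneg y hy)
  refine ⟨t.image q, ?_, ?_, fun x hx => by_contra fun hxΩ => ?_⟩
  · simpa using fun y hy => hqnorm y (ht y hy)
  · simpa using fun y hy => hqK y (ht y hy)
  -- On a segment from `K` to a point outside `Ω`, the exit point violates some constraint, and so
  -- does the far end since depths are affine.
  · obtain ⟨x₀, hx₀⟩ := hne
    obtain ⟨s, hs, hmem⟩ := exists_add_smul_sub_mem_frontier (hKΩ hx₀) hxΩ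
    obtain ⟨y, hy, hneg⟩ := mem_iUnion₂.1 (hcover hmem)
    have hpos := hqK y (ht y hy) x₀ hx₀
    have hnonneg := hx _ (Finset.mem_image_of_mem q hy)
    simp only [mem_ofPred_eq, depth, inner_add_right, inner_smul_right, inner_sub_right]
      at hneg hpos hnonneg
    nlinarith [hs.1, hs.2]

variable {ι : Type*} {ν : ι → E} {c : ι → ℝ}

theorem depth_le_infDist_frontier {Ω : Set E} (hν : ∀ i, ‖ν i‖ = 1) (hΩo : IsOpen Ω)
    (hfr : (frontier Ω).Nonempty) (hΩ : ∀ x, (∀ j, 0 ≤ depth (ν j) (c j) x) → x ∈ Ω) {i : ι}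
    {x : E} (hx : x ∈ cell ν c i) : depth (ν i) (c i) x ≤ infDist x (frontier Ω) := by
  refine (le_infDist hfr).2 fun y hy => ?_
  obtain ⟨j, hj⟩ : ∃ j, depth (ν j) (c j) y < 0 := by
    by_contra! h
    exact (hΩo.frontier_eq.subset hy).2 (hΩ y h)
  have hij : depth (ν i) (c i) x ≤ depth (ν j) (c j) x := by
    rcases eq_or_ne j i with rfl | hne
    · exact le_rfl
    · exact (hx.2 j hne).le
  linarith [(le_abs_self _).trans (abs_depth_sub_depth_le_dist (c := c j) (hν j) x y)]

variable [FiniteDimensional ℝ E] [MeasurableSpace E] [BorelSpace E]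

theorem volume_setOf_inner_eq {v : E} (hv : v ≠ 0) (a : ℝ) : volume {x | ⟪v, x⟫_ℝ = a} = 0 := by
  rcases {x | ⟪v, x⟫_ℝ = a}.eq_empty_or_nonempty with h | ⟨x₀, hx₀⟩
  · rw [h, measure_empty]
  have hker : {x | ⟪v, x⟫_ℝ = a} = (· - x₀) ⁻¹' ((innerSL ℝ v).ker : Set E) := by
    ext x
    simp [inner_sub_right, sub_eq_zero, show ⟪v, x₀⟫_ℝ = a from hx₀]
  have htop : (innerSL ℝ v).ker ≠ ⊤ := fun h => hv <| by
    simpa using (h.ge Submodule.mem_top : v ∈ (innerSL ℝ v).ker)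
  simp only [hker, sub_eq_add_neg, measure_preimage_add_right]
  exact Measure.addHaar_submodule volume _ htop

theorem ae_depth_ne_depth {ν ν' : E} {c c' : ℝ} (h : (ν, c) ≠ (ν', c')) :
    ∀ᵐ x, depth ν c x ≠ depth ν' c' x := by
  rcases eq_or_ne ν ν' with rfl | hν
  · exact Eventually.of_forall fun x => by simpa [depth] using h
  · refine measure_mono_null (fun x hx => ?_) (volume_setOf_inner_eq (sub_ne_zero.2 hν) (c - c'))
    have hx : depth ν c x = depth ν' c' x := by simpa using hx
    simp only [depth] at hx
    simp only [mem_ofPred_eq, inner_sub_left]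
    linarith

theorem ae_mem_iUnion_cell [Finite ι] [Nonempty ι]
    (hinj : Function.Injective fun i => (ν i, c i)) :
    ∀ᵐ x, (∀ j, 0 < depth (ν j) (c j) x) → x ∈ ⋃ i, cell ν c i := by
  have hne : ∀ᵐ x, ∀ i j, j ≠ i → depth (ν i) (c i) x ≠ depth (ν j) (c j) x :=
    ae_all_iff.2 fun i => ae_all_iff.2 fun j => by
      rcases eq_or_ne j i with rfl | hij
      · simp
      · filter_upwards [ae_depth_ne_depth (hinj.ne hij.symm)] with x hx _ using hx
  filter_upwards [hne] with x hx hpos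
  obtain ⟨i, hi⟩ := Finite.exists_min fun j => depth (ν j) (c j) x
  exact mem_iUnion.2 ⟨i, hpos i, fun j hj => (hi j).lt_of_ne (hx i j hj)⟩

end Polytope

section Homothety

variable {F : Type*} [NormedAddCommGroup F] [NormedSpace ℝ F] {Ω : Set F} {x₀ : F}

theorem homothety_closure_subset {r : ℝ} (hΩ : IsOpen Ω) (hconv : Convex ℝ Ω)
    (hx₀ : x₀ ∈ Ω) (hr : r ∈ Ico (0 : ℝ) 1) :
    AffineMap.homothety x₀ r '' closure Ω ⊆ Ω := by
  rintro _ ⟨x, hx, rfl⟩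
  have := hconv.combo_interior_closure_mem_interior (hΩ.interior_eq.symm ▸ hx₀) hx
    (sub_pos.2 hr.2) hr.1 (sub_add_cancel 1 r)
  rwa [hΩ.interior_eq, ← AffineMap.lineMap_apply_module, ← AffineMap.homothety_eq_lineMap] at this

theorem eventually_mem_homothety_closure {x : F} (hΩ : IsOpen Ω) (hx : x ∈ Ω) :
    ∀ᶠ r : ℝ in 𝓝[<] 1, x ∈ AffineMap.homothety x₀ r '' closure Ω := by
  have hlim : Tendsto (fun r : ℝ => AffineMap.homothety x₀ r⁻¹ x) (𝓝[<] 1) (𝓝 x) := by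
    simp only [AffineMap.homothety_apply, vsub_eq_sub, vadd_eq_add]
    have hinv : Tendsto (fun r : ℝ => r⁻¹) (𝓝[<] 1) (𝓝 1) := by
      simpa using (tendsto_inv₀ (one_ne_zero (α := ℝ))).mono_left nhdsWithin_le_nhds
    simpa using (hinv.smul_const (x - x₀)).add_const x₀
  filter_upwards [hlim.eventually (hΩ.mem_nhds hx),
    Ioo_mem_nhdsLT (zero_lt_one (α := ℝ))] with r hr hr0
  refine ⟨_, subset_closure hr, ?_⟩
  rw [← AffineMap.homothety_mul_apply, mul_inv_cancel₀ hr0.1.ne', AffineMap.homothety_one,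
    AffineMap.id_apply]

theorem tendsto_lintegral_homothety_closure [FiniteDimensional ℝ F] [MeasurableSpace F]
    [BorelSpace F] {μ : Measure F} (hΩ : IsOpen Ω) (hbd : IsBounded Ω) (hconv : Convex ℝ Ω)
    (hx₀ : x₀ ∈ Ω) {g : F → ℝ≥0∞} (hg : Measurable g) :
    Tendsto (fun r : ℝ => ∫⁻ x in AffineMap.homothety x₀ r '' closure Ω, g x ∂μ) (𝓝[<] 1)
      (𝓝 (∫⁻ x in Ω, g x ∂μ)) := by
  have hcover : AECover (μ.restrict Ω) (𝓝[<] (1 : ℝ))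
      fun r => AffineMap.homothety x₀ r '' closure Ω :=
    ⟨(ae_restrict_mem hΩ.measurableSet).mono fun x hx => eventually_mem_homothety_closure hΩ hx,
      fun r => (hbd.isCompact_closure.image (AffineMap.homothety_continuous x₀ r)).measurableSet⟩
  refine (hcover.lintegral_tendsto_of_countably_generated hg.aemeasurable).congr' ?_
  filter_upwards [Ico_mem_nhdsLT (zero_lt_one (α := ℝ))] with r hr
  rw [Measure.restrict_restrict (hcover.measurableSet r),
    inter_eq_left.2 (homothety_closure_subset hΩ hconv hx₀ hr)]

theorem eventually_dist_homothety_lt {ε : ℝ} (hbd : IsBounded Ω) (hε : 0 < ε) :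
    ∀ᶠ r : ℝ in 𝓝[<] 1, ∀ y ∈ Ω, dist (AffineMap.homothety x₀ r y) y < ε := by
  obtain ⟨D, hD⟩ := hbd.subset_ball x₀
  have hlim : Tendsto (fun r : ℝ => ‖1 - r‖ * D) (𝓝[<] 1) (𝓝 0) :=
    (Continuous.tendsto' (by fun_prop) 1 0 (by simp)).mono_left nhdsWithin_le_nhds
  filter_upwards [hlim.eventually_lt_const hε] with r hr y hy
  rw [dist_homothety_self, dist_comm]
  exact (mul_le_mul_of_nonneg_left (mem_ball.1 (hD hy)).le (norm_nonneg _)).trans_lt hr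

end Homothety

section Hardy

variable {E : Type*} [NormedAddCommGroup E] [InnerProductSpace ℝ E] [FiniteDimensional ℝ E]
  [MeasurableSpace E] [BorelSpace E] {m : ℕ} {p α : ℝ} {u : E → ℝ} {Ω : Set E}

theorem lintegral_pos_depth_le_sum_cell {ι : Type*} [Fintype ι] [Nonempty ι] {ν : ι → E}
    {c : ι → ℝ} (hp : 0 ≤ p) (hα : 0 < α) (hν : ∀ i, ‖ν i‖ = 1)
    (hinj : Function.Injective fun i => (ν i, c i)) (hΩo : IsOpen Ω)
    (hfr : (frontier Ω).Nonempty) (hΩ : ∀ x, (∀ j, 0 ≤ depth (ν j) (c j) x) → x ∈ Ω) :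
    ∫⁻ x in {x | ∀ j, 0 < depth (ν j) (c j) x},
        ENNReal.ofReal (|u x| ^ p / (infDist x (frontier Ω) + α) ^ p) ≤
      ∑ i, ∫⁻ x in cell ν c i, ENNReal.ofReal (|u x| ^ p / (depth (ν i) (c i) x + α) ^ p) := by
  refine (lintegral_mono_set' (t := ⋃ i, cell ν c i) (ae_mem_iUnion_cell hinj)).trans ?_
  rw [lintegral_iUnion (fun i => isOpen_cell.measurableSet) pairwise_disjoint_cell, tsum_fintype]
  refine Finset.sum_le_sum fun i _ => setLIntegral_mono' isOpen_cell.measurableSet fun x hx => ?_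
  have := hx.1
  gcongr
  exact depth_le_infDist_frontier hν hΩo hfr hΩ hx

theorem lintegral_hardy_polytope {ι : Type*} [Finite ι] [Nonempty ι] {ν : ι → E} {c : ι → ℝ}
    (hE : Module.finrank ℝ E = m + 1) (hp : 1 < p) (hα : 0 < α) (hν : ∀ i, ‖ν i‖ = 1)
    (hinj : Function.Injective fun i => (ν i, c i)) (hΩo : IsOpen Ω) (hbd : IsBounded Ω)
    (hfr : (frontier Ω).Nonempty) (hΩ : ∀ x, (∀ j, 0 ≤ depth (ν j) (c j) x) → x ∈ Ω)
    (hu : Measurable u) (hdiff : ∀ x ∈ Ω, DifferentiableAt ℝ u x) {w : E → ℝ≥0∞}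
    (hw : ∀ i, ∀ y ∈ shadow ν c (frontier Ω) i,
      ENNReal.ofReal (|u (y + depth (ν i) (c i) y • ν i)| ^ p) ≤ w y) :
    ENNReal.ofReal (((p - 1) / p) ^ p) * ∫⁻ x in {x | ∀ j, 0 < depth (ν j) (c j) x},
        ENNReal.ofReal (|u x| ^ p / (infDist x (frontier Ω) + α) ^ p) ≤
      (∫⁻ x in Ω, ENNReal.ofReal (‖fderiv ℝ u x‖ ^ p)) +
        ENNReal.ofReal (((p - 1) / p) ^ (p - 1) * α ^ (1 - p)) *
          ∫⁻ y in frontier Ω, w y ∂μH[m] := by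
  have := Fintype.ofFinite ι
  have hcell : ∀ i, MeasurableSet (cell ν c i) := fun i => isOpen_cell.measurableSet
  have hshadow : ∀ i, MeasurableSet (shadow ν c (frontier Ω) i) := fun i =>
    measurableSet_shadow isClosed_frontier.measurableSet
  calc
    _ ≤ ENNReal.ofReal (((p - 1) / p) ^ p) * ∑ i, ∫⁻ x in cell ν c i,
          ENNReal.ofReal (|u x| ^ p / (depth (ν i) (c i) x + α) ^ p) := by
      gcongr
      exact lintegral_pos_depth_le_sum_cell (by linarith) hα hν hinj hΩo hfr hΩ
    _ ≤ ∑ i, ((∫⁻ x in cell ν c i, ENNReal.ofReal (‖fderiv ℝ u x‖ ^ p)) +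
          ENNReal.ofReal (((p - 1) / p) ^ (p - 1) * α ^ (1 - p)) *
            ∫⁻ y in shadow ν c (frontier Ω) i, w y ∂μH[m]) := by
      rw [Finset.mul_sum]
      gcongr with i
      exact lintegral_hardy_cell_le_shadow hE hp hα hν hbd hΩ hu hdiff (hw i)
    _ = (∫⁻ x in ⋃ i, cell ν c i, ENNReal.ofReal (‖fderiv ℝ u x‖ ^ p)) +
          ENNReal.ofReal (((p - 1) / p) ^ (p - 1) * α ^ (1 - p)) *
            ∫⁻ y in ⋃ i, shadow ν c (frontier Ω) i, w y ∂μH[m] := by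
      rw [lintegral_iUnion hcell pairwise_disjoint_cell, tsum_fintype,
        lintegral_iUnion hshadow (pairwise_disjoint_shadow hν _), tsum_fintype,
        Finset.sum_add_distrib, ← Finset.mul_sum]
    _ ≤ _ := by
      gcongr
      · exact iUnion_subset fun i x hx => hΩ x (depth_nonneg_of_mem_cell hx)
      · exact iUnion_subset fun i => sep_subset _ _

theorem lintegral_hardy_compact {K : Set E} {ε : ℝ} (hE : Module.finrank ℝ E = m + 1) (hp : 1 < p)
    (hα : 0 < α) (hΩ : IsOpen Ω) (hbd : IsBounded Ω) (hK : IsCompact K) (hKconv : Convex ℝ K)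
    (hne : K.Nonempty) (hKΩ : K ⊆ Ω) (hε : ∀ y ∈ frontier Ω, ∃ x ∈ K, dist x y < ε)
    (hu : Measurable u) (hdiff : ∀ x ∈ Ω, DifferentiableAt ℝ u x) {w : E → ℝ≥0∞}
    (hw : ∀ x ∈ Ω, ∀ y ∈ frontier Ω, dist x y < ε → ENNReal.ofReal (|u x| ^ p) ≤ w y) :
    ENNReal.ofReal (((p - 1) / p) ^ p) *
        ∫⁻ x in K, ENNReal.ofReal (|u x| ^ p / (infDist x (frontier Ω) + α) ^ p) ≤
      (∫⁻ x in Ω, ENNReal.ofReal (‖fderiv ℝ u x‖ ^ p)) +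
        ENNReal.ofReal (((p - 1) / p) ^ (p - 1) * α ^ (1 - p)) *
          ∫⁻ y in frontier Ω, w y ∂μH[m] := by
  have : Nontrivial E := Module.nontrivial_of_finrank_pos (R := ℝ) (by omega)
  have hfr := nonempty_frontier_of_isBounded hbd (hne.mono hKΩ)
  obtain ⟨T, hν, hTK, hTΩ⟩ := exists_finset_depth hΩ hbd hK hKconv hne hKΩ
  have hT : Nonempty T := by
    by_contra hT
    obtain ⟨y, hy⟩ := hfr
    exact (hΩ.frontier_eq.subset hy).2 (hTΩ y fun q hq => (hT ⟨q, hq⟩).elim)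
  have hTΩ' : ∀ x, (∀ q : T, 0 ≤ depth q.1.1 q.1.2 x) → x ∈ Ω := fun x hx =>
    hTΩ x fun q hq => hx ⟨q, hq⟩
  have hν' : ∀ q : T, ‖q.1.1‖ = 1 := fun q => hν q q.2
  refine le_trans ?_ (lintegral_hardy_polytope hE hp hα hν' Subtype.val_injective hΩ hbd hfr hTΩ'
    hu hdiff fun q y hy => hw _ (hTΩ' _ (depth_nonneg_of_mem_face hy.2.2)) y hy.1 ?_)
  · gcongr
    exact fun x hx q => hTK q q.2 x hx
  · obtain ⟨x, hx, hxy⟩ := hε y hy.1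
    have hlip := (le_abs_self _).trans (abs_depth_sub_depth_le_dist (c := q.1.2) (hν' q) x y)
    have hdist : dist (y + depth q.1.1 q.1.2 y • q.1.1) y = -depth q.1.1 q.1.2 y := by
      simp [dist_eq_norm, norm_smul, hν' q, abs_of_nonpos hy.2.1]
    linarith [hTK q q.2 x hx]

theorem lintegral_hardy_add_const {η : ℝ} (hE : Module.finrank ℝ E = m + 1) (hp : 1 < p)
    (hα : 0 < α) (hΩ : IsOpen Ω) (hne : Ω.Nonempty) (hbd : IsBounded Ω) (hconv : Convex ℝ Ω)
    (hu : Measurable u) (hcont : ContinuousOn u (closure Ω))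
    (hdiff : ∀ x ∈ Ω, DifferentiableAt ℝ u x) (hη : 0 < η) :
    ENNReal.ofReal (((p - 1) / p) ^ p) *
        ∫⁻ x in Ω, ENNReal.ofReal (|u x| ^ p / (infDist x (frontier Ω) + α) ^ p) ≤
      (∫⁻ x in Ω, ENNReal.ofReal (‖fderiv ℝ u x‖ ^ p)) +
        ENNReal.ofReal (((p - 1) / p) ^ (p - 1) * α ^ (1 - p)) *
          ∫⁻ y in frontier Ω, (ENNReal.ofReal (|u y| ^ p) + ENNReal.ofReal η) ∂μH[m] := by
  obtain ⟨x₀, hx₀⟩ := hne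
  have hpow : ContinuousOn (fun x => |u x| ^ p) (closure Ω) :=
    hcont.abs.rpow_const fun _ _ => Or.inr (by linarith)
  obtain ⟨ε, hε, hunif⟩ := Metric.uniformContinuousOn_iff.1
    (hbd.isCompact_closure.uniformContinuousOn_of_continuous hpow) η hη
  have hw : ∀ x ∈ Ω, ∀ y ∈ frontier Ω, dist x y < ε →
      ENNReal.ofReal (|u x| ^ p) ≤ ENNReal.ofReal (|u y| ^ p) + ENNReal.ofReal η := by
    intro x hx y hy hxy
    have := hunif x (subset_closure hx) y (frontier_subset_closure hy) hxy
    rw [Real.dist_eq] at this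
    rw [← ENNReal.ofReal_add (by positivity) hη.le]
    exact ENNReal.ofReal_le_ofReal (by linarith [(abs_lt.1 this).2])
  have hmeas : Measurable fun x =>
      ENNReal.ofReal (|u x| ^ p / (infDist x (frontier Ω) + α) ^ p) := by
    fun_prop
  refine le_of_tendsto (ENNReal.Tendsto.const_mul (tendsto_lintegral_homothety_closure hΩ hbd
    hconv hx₀ hmeas) (Or.inr ENNReal.ofReal_ne_top)) ?_
  filter_upwards [eventually_dist_homothety_lt (x₀ := x₀) hbd.closure hε,
    Ico_mem_nhdsLT (zero_lt_one (α := ℝ))] with r hdist hr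
  exact lintegral_hardy_compact hE hp hα hΩ hbd
    (hbd.isCompact_closure.image (AffineMap.homothety_continuous x₀ r))
    (hconv.closure.affine_image _) ⟨_, mem_image_of_mem _ (subset_closure hx₀)⟩
    (homothety_closure_subset hΩ hconv hx₀ hr)
    (fun y hy => ⟨_, mem_image_of_mem _ (frontier_subset_closure hy),
      hdist y (frontier_subset_closure hy)⟩) hu hdiff hw

theorem lintegral_hardy_of_measurable (hE : Module.finrank ℝ E = m + 1) (hp : 1 < p) (hα : 0 < α)
    (hΩ : IsOpen Ω) (hne : Ω.Nonempty) (hbd : IsBounded Ω) (hconv : Convex ℝ Ω)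
    (hu : Measurable u) (hcont : ContinuousOn u (closure Ω))
    (hdiff : ∀ x ∈ Ω, DifferentiableAt ℝ u x) :
    ENNReal.ofReal (((p - 1) / p) ^ p) *
        ∫⁻ x in Ω, ENNReal.ofReal (|u x| ^ p / (infDist x (frontier Ω) + α) ^ p) ≤
      (∫⁻ x in Ω, ENNReal.ofReal (‖fderiv ℝ u x‖ ^ p)) +
        ENNReal.ofReal (((p - 1) / p) ^ (p - 1) * α ^ (1 - p)) *
          ∫⁻ y in frontier Ω, ENNReal.ofReal (|u y| ^ p) ∂μH[m] := by
  have hfin := (hausdorffMeasure_frontier_lt_top hE hΩ hne hbd hconv).ne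
  have hlim : Tendsto (fun η : ℝ => (∫⁻ y in frontier Ω, ENNReal.ofReal (|u y| ^ p) ∂μH[m]) +
      ENNReal.ofReal η * μH[m] (frontier Ω)) (𝓝[>] 0)
      (𝓝 (∫⁻ y in frontier Ω, ENNReal.ofReal (|u y| ^ p) ∂μH[m])) := by
    have h0 : Tendsto ENNReal.ofReal (𝓝[>] 0) (𝓝 0) :=
      (ENNReal.continuous_ofReal.tendsto' 0 0 ENNReal.ofReal_zero).mono_left nhdsWithin_le_nhds
    simpa using (ENNReal.Tendsto.mul_const h0 (Or.inr hfin)).const_add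
      (∫⁻ y in frontier Ω, ENNReal.ofReal (|u y| ^ p) ∂μH[m])
  refine ge_of_tendsto ((ENNReal.Tendsto.const_mul hlim
    (Or.inr ENNReal.ofReal_ne_top)).const_add _) ?_
  filter_upwards [self_mem_nhdsWithin] with η hη
  rw [← setLIntegral_const, ← lintegral_add_right _ measurable_const]
  exact lintegral_hardy_add_const hE hp hα hΩ hne hbd hconv hu hcont hdiff hη

theorem lintegral_hardy_convex (hE : Module.finrank ℝ E = m + 1) (hp : 1 < p) (hα : 0 < α)
    (hΩ : IsOpen Ω) (hne : Ω.Nonempty) (hbd : IsBounded Ω) (hconv : Convex ℝ Ω)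
    (hcont : ContinuousOn u (closure Ω)) (hdiff : ∀ x ∈ Ω, DifferentiableAt ℝ u x) :
    ENNReal.ofReal (((p - 1) / p) ^ p) *
        ∫⁻ x in Ω, ENNReal.ofReal (|u x| ^ p / (infDist x (frontier Ω) + α) ^ p) ≤
      (∫⁻ x in Ω, ENNReal.ofReal (‖fderiv ℝ u x‖ ^ p)) +
        ENNReal.ofReal (((p - 1) / p) ^ (p - 1) * α ^ (1 - p)) *
          ∫⁻ y in frontier Ω, ENNReal.ofReal (|u y| ^ p) ∂μH[m] := by
  classical
  have heq : EqOn ((closure Ω).indicator u) u (closure Ω) := eqOn_indicator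
  have hnhds : ∀ x ∈ Ω, (closure Ω).indicator u =ᶠ[𝓝 x] u := fun x hx =>
    (heq.mono subset_closure).eventuallyEq_of_mem (hΩ.mem_nhds hx)
  have hmeas : Measurable ((closure Ω).indicator u) := by
    rw [← piecewise_eq_indicator]
    exact hcont.measurable_piecewise continuousOn_const isClosed_closure.measurableSet
  have hardy := lintegral_hardy_of_measurable hE hp hα hΩ hne hbd hconv hmeas (hcont.congr heq)
    fun x hx => (hnhds x hx).differentiableAt_iff.2 (hdiff x hx)
  have hweight : ∫⁻ x in Ω, ENNReal.ofReal
        (|(closure Ω).indicator u x| ^ p / (infDist x (frontier Ω) + α) ^ p) =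
      ∫⁻ x in Ω, ENNReal.ofReal (|u x| ^ p / (infDist x (frontier Ω) + α) ^ p) :=
    setLIntegral_congr_fun hΩ.measurableSet fun x hx => by simp only [heq (subset_closure hx)]
  have hgrad : ∫⁻ x in Ω, ENNReal.ofReal (‖fderiv ℝ ((closure Ω).indicator u) x‖ ^ p) =
      ∫⁻ x in Ω, ENNReal.ofReal (‖fderiv ℝ u x‖ ^ p) :=
    setLIntegral_congr_fun hΩ.measurableSet fun x hx => by simp only [(hnhds x hx).fderiv_eq]
  have htrace : ∫⁻ y in frontier Ω, ENNReal.ofReal (|(closure Ω).indicator u y| ^ p) ∂μH[m] =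
      ∫⁻ y in frontier Ω, ENNReal.ofReal (|u y| ^ p) ∂μH[m] :=
    setLIntegral_congr_fun isClosed_frontier.measurableSet fun y hy => by
      simp only [heq (frontier_subset_closure hy)]
  rwa [hweight, hgrad, htrace] at hardy

end Hardy

section LowerBound

variable {m : ℕ} {p σ : ℝ} {Ω : Set (EuclideanSpace ℝ (Fin (m + 1)))}

theorem wnormC_ne_top {n : ℕ} {Ω : Set (EuclideanSpace ℝ (Fin n))}
    {u : EuclideanSpace ℝ (Fin n) → ℝ} (hp : 1 < p) (hσ : 0 < σ) (hu : MemW1p p Ω u) :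
    wnormC p Ω σ u ≠ ∞ := by
  have hα := alphaC_pos hp hσ
  refine ne_top_of_le_ne_top (ENNReal.mul_ne_top ENNReal.ofReal_ne_top hu.2.2.1)
    (le_of_le_of_eq (lintegral_mono fun x => ?_)
      (lintegral_const_mul' (ENNReal.ofReal (alphaC p σ ^ p)⁻¹) _ ENNReal.ofReal_ne_top))
  rw [← ENNReal.ofReal_mul (by positivity), inv_mul_eq_div]
  gcongr
  exact le_add_of_nonneg_left infDist_nonneg

theorem ofReal_rpow_le_lamC (hp : 1 < p) (hσ : 0 < σ) (hΩ : IsOpen Ω) (hne : Ω.Nonempty)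
    (hbd : IsBounded Ω) (hconv : Convex ℝ Ω) :
    ENNReal.ofReal (((p - 1) / p) ^ p) ≤ lamC p Ω σ := by
  refine le_iInf fun u => le_iInf fun hu => le_iInf fun hw => ?_
  rw [ENNReal.le_div_iff_mul_le (Or.inl hw) (Or.inl (wnormC_ne_top hp hσ hu))]
  have := lintegral_hardy_convex (m := m) (by simp) hp (alphaC_pos hp hσ) hΩ hne hbd hconv
    hu.1 hu.2.1
  rwa [rpow_mul_alphaC_rpow hp hσ, show (m : ℝ) = (m + 1 : ℕ) - 1 by simp] at this

end LowerBound

section TangentBall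

variable {E : Type*} [NormedAddCommGroup E] [InnerProductSpace ℝ E] {Ω S : Set E} {e x y : E}
  {R : ℝ}

theorem eventually_add_smul_mem_ball (he : ‖e‖ = 1) (hR : 0 < R) (hS : IsCompact S)
    (hpos : ∀ z ∈ S, 0 < ⟪e, z⟫_ℝ) :
    ∀ᶠ r : ℝ in 𝓝[>] 0, ∀ z ∈ S, y + r • z ∈ ball (y + R • e) R := by
  have hev : ∀ᶠ r : ℝ in 𝓝 0, ∀ z ∈ S, r * ‖z‖ ^ 2 < 2 * R * ⟪e, z⟫_ℝ := by
    refine hS.eventually_forall_of_forall_eventually fun z hz => ?_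
    refine ContinuousAt.eventually_lt (by fun_prop) (by fun_prop) ?_
    simpa using mul_pos (by positivity) (hpos z hz)
  filter_upwards [nhdsWithin_le_nhds hev, self_mem_nhdsWithin] with r hr (hr0 : 0 < r) z hz
  have hexpand : ‖r • z - R • e‖ ^ 2 = R ^ 2 + r * (r * ‖z‖ ^ 2 - 2 * R * ⟪e, z⟫_ℝ) := by
    rw [norm_sub_sq_real, norm_smul, norm_smul, he, real_inner_smul_left, real_inner_smul_right,
      real_inner_comm, Real.norm_of_nonneg hr0.le, Real.norm_of_nonneg hR.le]
    ring
  have hneg := mul_neg_of_pos_of_neg hr0 (sub_neg.2 (hr z hz))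
  rw [mem_ball, dist_add_left, dist_eq_norm]
  exact lt_of_pow_lt_pow_left₀ 2 hR.le (by linarith)

theorem exists_ball_add_smul_subset [FiniteDimensional ℝ E] (hΩ : IsOpen Ω) (hne : Ω.Nonempty)
    (hfr : (frontier Ω).Nonempty) :
    ∃ y ∈ frontier Ω, ∃ e : E, ‖e‖ = 1 ∧ ∃ R > 0, ball (y + R • e) R ⊆ Ω := by
  obtain ⟨x, hx⟩ := hne
  obtain ⟨y, hy, hxy⟩ := exists_mem_frontier_infDist_compl_eq_dist hx fun h => by
    simp [h] at hfr
  have hR : ‖x - y‖ ≠ 0 := by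
    rw [norm_ne_zero_iff, sub_ne_zero]
    rintro rfl
    exact (hΩ.frontier_eq.subset hy).2 hx
  refine ⟨y, hy, ‖x - y‖⁻¹ • (x - y), by simp [norm_smul, hR], ‖x - y‖, by positivity, ?_⟩
  rw [smul_inv_smul₀ hR, add_sub_cancel, ← dist_eq_norm, ← hxy]
  exact ball_infDist_compl_subset

-- Were `x` on the wrong side, `y` would lie between a point of `Ω` and a point of the ball.
theorem inner_sub_pos_of_ball_subset (hΩ : IsOpen Ω) (hconv : Convex ℝ Ω) (hy : y ∉ Ω)
    (he : ‖e‖ = 1) (hR : 0 < R) (hball : ball (y + R • e) R ⊆ Ω) (hx : x ∈ Ω) :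
    0 < ⟪e, x - y⟫_ℝ := by
  by_contra! hle
  have hshift : Tendsto (fun ε : ℝ => x - ε • e) (𝓝[>] 0) (𝓝 x) :=
    (Continuous.tendsto' (by fun_prop) 0 x (by simp)).mono_left nhdsWithin_le_nhds
  obtain ⟨ε, hxε, (hε : 0 < ε)⟩ :=
    ((hshift.eventually (hΩ.mem_nhds hx)).and self_mem_nhdsWithin).exists
  have hpos : 0 < ⟪e, y - (x - ε • e)⟫_ℝ := by
    have : ⟪e, y - (x - ε • e)⟫_ℝ = ε - ⟪e, x - y⟫_ℝ := by
      simp only [inner_sub_right, real_inner_smul_right, real_inner_self_eq_norm_sq, he]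
      ring
    linarith
  obtain ⟨r, hr, (hr0 : 0 < r)⟩ := ((eventually_add_smul_mem_ball (y := y) he hR isCompact_singleton
    (by simpa using hpos)).and self_mem_nhdsWithin).exists
  refine hy ?_
  convert hconv hxε (hball (hr _ rfl)) (a := r / (1 + r)) (b := 1 / (1 + r)) (by positivity)
    (by positivity) (by field_simp; ring) using 1
  match_scalars <;> field_simp <;> ring

theorem infDist_frontier_le_inner_sub (he : ‖e‖ = 1) (hpos : ∀ x ∈ Ω, 0 < ⟪e, x - y⟫_ℝ)
    (hx : x ∈ Ω) : infDist x (frontier Ω) ≤ ⟪e, x - y⟫_ℝ := by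
  have hout : x - ⟪e, x - y⟫_ℝ • e ∉ Ω := fun h => by
    have := hpos _ h
    simp [sub_right_comm x, inner_sub_right _ (x - y), real_inner_smul_right, he] at this
  obtain ⟨t, ht, hmem⟩ := exists_add_smul_sub_mem_frontier hx hout
  calc
    infDist x (frontier Ω) ≤ dist x _ := infDist_le_dist_of_mem hmem
    _ = t * ⟪e, x - y⟫_ℝ := by
      simp [dist_eq_norm, norm_smul, he, abs_of_nonneg (hpos x hx).le, abs_of_nonneg ht.1]
    _ ≤ _ := mul_le_of_le_one_left (hpos x hx).le ht.2

end TangentBall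

section LogBox

variable {E : Type*} [NormedAddCommGroup E] [InnerProductSpace ℝ E] {m : ℕ}
  {b : OrthonormalBasis (Fin (m + 1)) ℝ E} {r N R a : ℝ} {z : E}

/-- Logarithmic coordinates on the half-space `⟪b 0, z⟫ > 0`, centred at height `r`. The height is
measured on the logarithmic scale in units of `N`, the tail coordinates in units of `R`. -/
def logCoord (b : OrthonormalBasis (Fin (m + 1)) ℝ E) (r N R : ℝ) (z : E) : ℝ × (Fin m → ℝ) :=
  (N⁻¹ * (Real.log ⟪b 0, z⟫_ℝ - Real.log r), R⁻¹ • tailCoord b z)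

/-- The box which logarithmic coordinates map onto the closed ball of radius `a`. -/
def logBox (b : OrthonormalBasis (Fin (m + 1)) ℝ E) (r N R a : ℝ) : Set E :=
  {z | ⟪b 0, z⟫_ℝ ∈ Icc (r * Real.exp (-(a * N))) (r * Real.exp (a * N)) ∧
    ‖tailCoord b z‖ ≤ a * R}

theorem inner_pos_of_mem_logBox (hr : 0 < r) (hz : z ∈ logBox b r N R a) : 0 < ⟪b 0, z⟫_ℝ :=
  (by positivity : 0 < r * Real.exp (-(a * N))).trans_le hz.1.1

theorem norm_logCoord_le_iff (hr : 0 < r) (hN : 0 < N) (hR : 0 < R) (hz : 0 < ⟪b 0, z⟫_ℝ) :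
    ‖logCoord b r N R z‖ ≤ a ↔ z ∈ logBox b r N R a := by
  have hlog (s : ℝ) : Real.log (r * Real.exp s) = Real.log r + s := by
    rw [Real.log_mul hr.ne' (Real.exp_pos s).ne', Real.log_exp]
  rw [logCoord, norm_prod_le_iff, norm_smul, norm_inv, Real.norm_of_nonneg hR.le,
    inv_mul_le_iff₀ hR, mul_comm R, Real.norm_eq_abs, abs_le, inv_mul_le_iff₀ hN,
    le_inv_mul_iff₀ hN, logBox, mem_ofPred_eq, mem_Icc,
    ← Real.log_le_log_iff (by positivity) hz, ← Real.log_le_log_iff hz (by positivity), hlog, hlog]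
  constructor <;> rintro ⟨⟨h₁, h₂⟩, h₃⟩ <;> exact ⟨⟨by linarith, by linarith⟩, h₃⟩

theorem logBox_subset {a' : ℝ} (hr : 0 ≤ r) (hN : 0 ≤ N) (hR : 0 ≤ R) (ha : a ≤ a') :
    logBox b r N R a ⊆ logBox b r N R a' := fun _ hz =>
  ⟨Icc_subset_Icc (by gcongr) (by gcongr) hz.1, hz.2.trans (by gcongr)⟩

theorem isClosed_logBox : IsClosed (logBox b r N R a) :=
  (isClosed_Icc.preimage (by fun_prop : Continuous fun z : E => ⟪b 0, z⟫_ℝ)).inter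
    (isClosed_le (tailCoord b).continuous.norm continuous_const)

theorem isCompact_logBox : IsCompact (logBox b r N R a) := by
  have himage : IsCompact ((fun q : ℝ × (Fin m → ℝ) => q.1 • b 0 + tailEmbed b q.2) ''
      Icc (r * Real.exp (-(a * N))) (r * Real.exp (a * N)) ×ˢ closedBall 0 (a * R)) :=
    (isCompact_Icc.prod (isCompact_closedBall _ _)).image (by fun_prop)
  refine himage.of_isClosed_subset isClosed_logBox fun z hz => ?_
  exact ⟨(⟪b 0, z⟫_ℝ, tailCoord b z), ⟨hz.1, by simpa using hz.2⟩,
    inner_smul_add_tailEmbed_tailCoord b z⟩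

theorem inv_smul_mem_logBox (hr : 0 < r) (hz : z ∈ logBox b r N (r * R) a) :
    r⁻¹ • z ∈ logBox b 1 N R a := by
  obtain ⟨⟨hlow, hupp⟩, htail⟩ := hz
  refine ⟨⟨?_, ?_⟩, ?_⟩
  · rwa [real_inner_smul_right, one_mul, le_inv_mul_iff₀ hr]
  · rwa [real_inner_smul_right, one_mul, inv_mul_le_iff₀ hr]
  · rwa [map_smul, norm_smul, norm_inv, Real.norm_of_nonneg hr.le, inv_mul_le_iff₀ hr,
      mul_left_comm]

theorem lintegral_inv_Icc {s t : ℝ} (hs : 0 < s) (hst : s ≤ t) :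
    ∫⁻ x in Icc s t, ENNReal.ofReal x⁻¹ = ENNReal.ofReal (Real.log (t / s)) := by
  rw [← integral_inv_of_pos hs (hs.trans_le hst), intervalIntegral.integral_of_le hst,
    ← integral_Icc_eq_integral_Ioc]
  refine (ofReal_integral_eq_lintegral_ofReal ?_ ?_).symm
  · exact (continuousOn_inv₀.mono fun x hx => (hs.trans_le hx.1).ne').integrableOn_Icc
  · exact (ae_restrict_mem measurableSet_Icc).mono fun x hx => inv_nonneg.2 (hs.le.trans hx.1)

theorem setLIntegral_logBox_inv [FiniteDimensional ℝ E] [MeasurableSpace E] [BorelSpace E]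
    (hr : 0 < r) (hN : 0 ≤ N) (hR : 0 ≤ R) (ha : 0 ≤ a) :
    ∫⁻ z in logBox b r N R a, ENNReal.ofReal (⟪b 0, z⟫_ℝ)⁻¹ =
      ENNReal.ofReal (a ^ (m + 1) * (2 * N * (2 * R) ^ m)) := by
  classical
  have hmem (z : Fin m → ℝ) (t : ℝ) : t • b 0 + tailEmbed b z ∈ logBox b r N R a ↔
      t ∈ Icc (r * Real.exp (-(a * N))) (r * Real.exp (a * N)) ∧ z ∈ closedBall 0 (a * R) := by
    simp only [logBox, mem_ofPred_eq, inner_smul_add_tailEmbed, tailCoord_smul_add_tailEmbed,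
      mem_closedBall_zero_iff]
  have hslice (z : Fin m → ℝ) (t : ℝ) :
      (logBox b r N R a).indicator (fun z => ENNReal.ofReal (⟪b 0, z⟫_ℝ)⁻¹)
        (t • b 0 + tailEmbed b z) =
      (closedBall 0 (a * R)).indicator 1 z *
        (Icc (r * Real.exp (-(a * N))) (r * Real.exp (a * N))).indicator
          (fun t => ENNReal.ofReal t⁻¹) t := by
    rw [indicator_apply, indicator_apply, indicator_apply, inner_smul_add_tailEmbed,
      Pi.one_apply, ite_zero_mul_ite_zero, one_mul]
    exact if_congr ((hmem z t).trans and_comm) rfl rfl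
  have hexp : r * Real.exp (a * N) / (r * Real.exp (-(a * N))) = Real.exp (2 * a * N) := by
    rw [mul_div_mul_left _ _ hr.ne', ← Real.exp_sub]
    ring_nf
  have hle : -(a * N) ≤ a * N := neg_le_self (by positivity)
  rw [← lintegral_indicator isClosed_logBox.measurableSet, lintegral_eq_lintegral_tail b
    (Measurable.indicator (by fun_prop) isClosed_logBox.measurableSet)]
  simp only [hslice]
  rw [lintegral_lintegral_mul
      (measurable_one.indicator isClosed_closedBall.measurableSet).aemeasurable
      (Measurable.indicator (by fun_prop) measurableSet_Icc).aemeasurable,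
    lintegral_indicator_one isClosed_closedBall.measurableSet,
    lintegral_indicator measurableSet_Icc, lintegral_inv_Icc (by positivity) (by gcongr), hexp,
    Real.log_exp, Real.volume_pi_closedBall _ (by positivity), Fintype.card_fin,
    ← ENNReal.ofReal_mul (by positivity)]
  congr 1
  ring

theorem setLIntegral_logBox_inv_eq_mul [FiniteDimensional ℝ E] [MeasurableSpace E] [BorelSpace E]
    {a' : ℝ} (hr : 0 < r) (hN : 0 ≤ N) (hR : 0 ≤ R) (ha : 0 < a) (ha' : 0 ≤ a') :
    ∫⁻ z in logBox b r N R a', ENNReal.ofReal (⟪b 0, z⟫_ℝ)⁻¹ =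
      ENNReal.ofReal ((a' / a) ^ (m + 1)) *
        ∫⁻ z in logBox b r N R a, ENNReal.ofReal (⟪b 0, z⟫_ℝ)⁻¹ := by
  rw [setLIntegral_logBox_inv hr hN hR ha', setLIntegral_logBox_inv hr hN hR ha.le,
    ← ENNReal.ofReal_mul (by positivity), div_pow, ← mul_assoc (a' ^ (m + 1) / _),
    div_mul_cancel₀ _ (by positivity)]

end LogBox

section LogProfile

variable {E : Type*} [NormedAddCommGroup E] [InnerProductSpace ℝ E] {m : ℕ}
  {b : OrthonormalBasis (Fin (m + 1)) ℝ E} {r N R c M p : ℝ}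
  {θ : ContDiffBump (0 : ℝ × (Fin m → ℝ))} {z : E}

/-- The extremal `t ^ c` of the one-dimensional Hardy inequality in the height `t = ⟪b 0, z⟫`, cut
off by the bump `θ` in logarithmic coordinates. -/
def logProfile (b : OrthonormalBasis (Fin (m + 1)) ℝ E) (r N R c : ℝ)
    (θ : ContDiffBump (0 : ℝ × (Fin m → ℝ))) (z : E) : ℝ :=
  (max ⟪b 0, z⟫_ℝ 0) ^ c * θ (logCoord b r N R z)

theorem logProfile_eq_zero (hr : 0 < r) (hN : 0 < N) (hR : 0 < R) (hc : 0 < c)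
    (hz : z ∉ logBox b r N R θ.rOut) : logProfile b r N R c θ z = 0 := by
  rcases le_or_gt ⟪b 0, z⟫_ℝ 0 with h | h
  · rw [logProfile, max_eq_right h, Real.zero_rpow hc.ne', zero_mul]
  · rw [← norm_logCoord_le_iff hr hN hR h, not_le] at hz
    rw [logProfile, θ.zero_of_le_dist (by rw [dist_zero_right]; exact hz.le), mul_zero]

theorem logProfile_eventuallyEq_zero (hr : 0 < r) (hN : 0 < N) (hR : 0 < R) (hc : 0 < c)
    (hz : z ∉ logBox b r N R θ.rOut) : logProfile b r N R c θ =ᶠ[𝓝 z] fun _ => 0 := by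
  filter_upwards [isClosed_logBox.isOpen_compl.mem_nhds hz] with y hy
  exact logProfile_eq_zero hr hN hR hc hy

theorem logProfile_eq_rpow (hr : 0 < r) (hN : 0 < N) (hR : 0 < R)
    (hz : z ∈ logBox b r N R θ.rIn) : logProfile b r N R c θ z = ⟪b 0, z⟫_ℝ ^ c := by
  have hpos := inner_pos_of_mem_logBox hr hz
  rw [logProfile, max_eq_left hpos.le, θ.one_of_mem_closedBall, mul_one]
  exact mem_closedBall_zero_iff.2 ((norm_logCoord_le_iff hr hN hR hpos).2 hz)

theorem hasFDerivAt_logCoord (hz : 0 < ⟪b 0, z⟫_ℝ) :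
    HasFDerivAt (logCoord b r N R)
      ((N⁻¹ • (⟪b 0, z⟫_ℝ)⁻¹ • innerSL ℝ (b 0)).prod (R⁻¹ • tailCoord b)) z :=
  (((innerSL ℝ (b 0)).hasFDerivAt.log hz.ne').sub_const (Real.log r) |>.const_mul N⁻¹).prodMk
    ((tailCoord b).hasFDerivAt.const_smul R⁻¹)

theorem hasFDerivAt_logProfile (hz : 0 < ⟪b 0, z⟫_ℝ) :
    HasFDerivAt (logProfile b r N R c θ)
      (⟪b 0, z⟫_ℝ ^ c • (fderiv ℝ θ (logCoord b r N R z)).comp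
          ((N⁻¹ • (⟪b 0, z⟫_ℝ)⁻¹ • innerSL ℝ (b 0)).prod (R⁻¹ • tailCoord b)) +
        θ (logCoord b r N R z) • (c * ⟪b 0, z⟫_ℝ ^ (c - 1)) • innerSL ℝ (b 0)) z := by
  have hinner : HasFDerivAt (fun z => ⟪b 0, z⟫_ℝ) (innerSL ℝ (b 0)) z :=
    (innerSL ℝ (b 0)).hasFDerivAt
  have hθ : HasFDerivAt θ (fderiv ℝ θ (logCoord b r N R z)) (logCoord b r N R z) :=
    (θ.contDiff.differentiable (n := 1) one_ne_zero _).hasFDerivAt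
  refine ((hinner.rpow_const (Or.inl hz.ne')).mul
    (hθ.comp z (hasFDerivAt_logCoord hz))).congr_of_eventuallyEq ?_
  filter_upwards [hinner.continuousAt.eventually (lt_mem_nhds hz)] with y hy
  rw [logProfile, max_eq_left hy.le]
  rfl

theorem norm_fderiv_logCoord_le (hN : 0 < N) (hR : 0 < R) (hz : 0 < ⟪b 0, z⟫_ℝ)
    (hzR : N * ⟪b 0, z⟫_ℝ ≤ R) :
    ‖(N⁻¹ • (⟪b 0, z⟫_ℝ)⁻¹ • innerSL ℝ (b 0)).prod (R⁻¹ • tailCoord b)‖ ≤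
      N⁻¹ * (⟪b 0, z⟫_ℝ)⁻¹ := by
  refine ContinuousLinearMap.opNorm_le_bound _ (by positivity) fun h => ?_
  rw [ContinuousLinearMap.prod_apply, norm_prod_le_iff]
  constructor
  · have hinner : ‖⟪b 0, h⟫_ℝ‖ ≤ ‖h‖ := by simpa using norm_inner_le_norm (𝕜 := ℝ) (b 0) h
    simp only [smul_apply, innerSL_apply_apply, norm_smul, norm_inv,
      Real.norm_of_nonneg hN.le, Real.norm_of_nonneg hz.le, ← mul_assoc]
    gcongr
  · simp only [smul_apply, norm_smul, norm_inv, Real.norm_of_nonneg hR.le, ← mul_inv]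
    gcongr
    exact norm_tailCoord_le b h

theorem norm_fderiv_logProfile_le (hN : 0 < N) (hR : 0 < R) (hc : 0 ≤ c)
    (hM : ∀ q, ‖fderiv ℝ θ q‖ ≤ M) (hz : 0 < ⟪b 0, z⟫_ℝ) (hzR : N * ⟪b 0, z⟫_ℝ ≤ R) :
    ‖fderiv ℝ (logProfile b r N R c θ) z‖ ≤ (c + M / N) * ⟪b 0, z⟫_ℝ ^ (c - 1) := by
  have hM0 : 0 ≤ M := (norm_nonneg _).trans (hM 0)
  have hcomp : ‖(fderiv ℝ θ (logCoord b r N R z)).comp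
      ((N⁻¹ • (⟪b 0, z⟫_ℝ)⁻¹ • innerSL ℝ (b 0)).prod (R⁻¹ • tailCoord b))‖ ≤
        M * (N⁻¹ * (⟪b 0, z⟫_ℝ)⁻¹) :=
    (ContinuousLinearMap.opNorm_comp_le _ _).trans
      (mul_le_mul (hM _) (norm_fderiv_logCoord_le hN hR hz hzR) (norm_nonneg _) hM0)
  rw [(hasFDerivAt_logProfile hz).fderiv]
  calc
    _ ≤ ⟪b 0, z⟫_ℝ ^ c * (M * (N⁻¹ * (⟪b 0, z⟫_ℝ)⁻¹)) + 1 * (c * ⟪b 0, z⟫_ℝ ^ (c - 1)) := by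
      refine norm_add_le_of_le ?_ ?_
      · rw [norm_smul, Real.norm_of_nonneg (by positivity)]
        gcongr
      · rw [norm_smul, norm_smul, innerSL_apply_norm, b.norm_eq_one, mul_one,
          Real.norm_of_nonneg θ.nonneg, Real.norm_of_nonneg (by positivity)]
        gcongr
        exact θ.le_one
    _ = _ := by
      rw [Real.rpow_sub_one hz.ne']
      ring

theorem differentiable_logProfile (hr : 0 < r) (hN : 0 < N) (hR : 0 < R) (hc : 0 < c) :
    Differentiable ℝ (logProfile b r N R c θ) := fun z => by
  by_cases hz : z ∈ logBox b r N R θ.rOut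
  · exact (hasFDerivAt_logProfile (inner_pos_of_mem_logBox hr hz)).differentiableAt
  · exact (logProfile_eventuallyEq_zero hr hN hR hc hz).differentiableAt_iff.2
      (differentiableAt_const 0)

theorem rpow_sub_one_rpow {t : ℝ} (hp : 0 < p) (ht : 0 < t) :
    (t ^ ((p - 1) / p - 1)) ^ p = t⁻¹ := by
  have hexp : ((p - 1) / p - 1) * p = -1 := by
    field_simp
    ring
  rw [← Real.rpow_mul ht.le, hexp, Real.rpow_neg_one]

theorem lintegral_norm_fderiv_logProfile_le [FiniteDimensional ℝ E] [MeasurableSpace E]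
    [BorelSpace E] (hp : 1 < p) (hr : 0 < r) (hN : 0 < N)
    (hR : N * (r * Real.exp (θ.rOut * N)) ≤ R) (hM : ∀ q, ‖fderiv ℝ θ q‖ ≤ M) :
    ∫⁻ z, ENNReal.ofReal (‖fderiv ℝ (logProfile b r N R ((p - 1) / p) θ) z‖ ^ p) ≤
      ENNReal.ofReal (((p - 1) / p + M / N) ^ p) *
        ∫⁻ z in logBox b r N R θ.rOut, ENNReal.ofReal (⟪b 0, z⟫_ℝ)⁻¹ := by
  have hp0 : 0 < p := by linarith
  have hc : 0 < (p - 1) / p := div_pos (by linarith) hp0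
  have hR0 : 0 < R := lt_of_lt_of_le (by positivity) hR
  have hM0 : 0 ≤ M := (norm_nonneg _).trans (hM 0)
  rw [← lintegral_const_mul' _ _ ENNReal.ofReal_ne_top,
    ← lintegral_indicator isClosed_logBox.measurableSet]
  refine lintegral_mono fun z => ?_
  by_cases hz : z ∈ logBox b r N R θ.rOut
  · have hpos := inner_pos_of_mem_logBox hr hz
    have hzR : N * ⟪b 0, z⟫_ℝ ≤ R := (mul_le_mul_of_nonneg_left hz.1.2 hN.le).trans hR
    rw [indicator_of_mem hz, ← ENNReal.ofReal_mul (by positivity), ← rpow_sub_one_rpow hp0 hpos,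
      ← Real.mul_rpow (by positivity) (by positivity)]
    gcongr
    exact norm_fderiv_logProfile_le hN hR0 hc.le hM hpos hzR
  · rw [(logProfile_eventuallyEq_zero hr hN hR0 hc hz).fderiv_eq]
    simp [hp0.ne']

theorem inv_le_mul_logProfile_rpow_div {α d : ℝ} (hp : 1 < p) (hα : 0 < α) (hr : 0 < r)
    (hN : 0 < N) (hR : 0 < R) (hd : 0 ≤ d) (hdz : d ≤ ⟪b 0, z⟫_ℝ)
    (hz : z ∈ logBox b r N R θ.rIn) :
    (⟪b 0, z⟫_ℝ)⁻¹ ≤ (1 + α / (r * Real.exp (-(θ.rIn * N)))) ^ p *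
      (|logProfile b r N R ((p - 1) / p) θ z| ^ p / (d + α) ^ p) := by
  have hp0 : 0 < p := by linarith
  have hpos := inner_pos_of_mem_logBox hr hz
  have hα_le : α ≤ α / (r * Real.exp (-(θ.rIn * N))) * ⟪b 0, z⟫_ℝ := by
    rw [div_mul_eq_mul_div, le_div_iff₀ (by positivity)]
    exact mul_le_mul_of_nonneg_left hz.1.1 hα.le
  rw [logProfile_eq_rpow hr hN hR hz, abs_of_nonneg (by positivity),
    ← rpow_sub_one_rpow hp0 hpos, ← Real.div_rpow (by positivity) (by positivity),
    ← Real.mul_rpow (by positivity) (by positivity)]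
  gcongr
  rw [Real.rpow_sub_one hpos.ne', ← mul_div_assoc, div_le_div_iff₀ hpos (by positivity),
    mul_right_comm, mul_comm]
  gcongr
  linarith

end LogProfile

section UpperBound

theorem lamC_le_of_lintegral_le {n : ℕ} {p σ : ℝ} {Ω : Set (EuclideanSpace ℝ (Fin n))}
    {u : EuclideanSpace ℝ (Fin n) → ℝ} {K : ℝ≥0∞} (hp : 0 < p) (hbd : IsBounded Ω)
    (hcont : ContinuousOn u (closure Ω))
    (hdiff : ∀ x ∈ Ω, DifferentiableAt ℝ u x) (hzero : ∀ y ∈ frontier Ω, u y = 0)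
    (hw : wnormC p Ω σ u ≠ 0) (hfin : ∫⁻ x in Ω, ENNReal.ofReal (‖fderiv ℝ u x‖ ^ p) ≠ ∞)
    (hle : ∫⁻ x in Ω, ENNReal.ofReal (‖fderiv ℝ u x‖ ^ p) ≤ K * wnormC p Ω σ u) :
    lamC p Ω σ ≤ K := by
  have hmem : MemW1p p Ω u := by
    refine ⟨hcont, hdiff, ?_, hfin⟩
    obtain ⟨C, hC⟩ := hbd.isCompact_closure.exists_bound_of_continuousOn hcont
    refine (setLIntegral_lt_top_of_le_nnreal hbd.measure_lt_top.ne
      ⟨(C ^ p).toNNReal, fun x hx => ENNReal.ofReal_le_ofReal ?_⟩).ne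
    exact Real.rpow_le_rpow (abs_nonneg _) (hC x (subset_closure hx)) hp.le
  have htrace : ∫⁻ y, ENNReal.ofReal (|u y| ^ p) ∂(surf Ω) = 0 :=
    setLIntegral_eq_zero isClosed_frontier.measurableSet fun y hy => by
      simp [hzero y hy, Real.zero_rpow hp.ne']
  refine iInf_le_of_le u (iInf_le_of_le hmem (iInf_le_of_le hw (ENNReal.div_le_of_le_mul ?_)))
  rwa [QpC, htrace, mul_zero, add_zero]

variable {m : ℕ} {p σ r N R M : ℝ} {Ω : Set (EuclideanSpace ℝ (Fin (m + 1)))}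
  {y : EuclideanSpace ℝ (Fin (m + 1))}
  {b : OrthonormalBasis (Fin (m + 1)) ℝ (EuclideanSpace ℝ (Fin (m + 1)))}
  {θ : ContDiffBump (0 : ℝ × (Fin m → ℝ))}

theorem setLIntegral_logBox_le_mul_wnormC (hp : 1 < p) (hσ : 0 < σ) (hr : 0 < r) (hN : 0 < N)
    (hR : 0 < R) (hdist : ∀ x ∈ Ω, infDist x (frontier Ω) ≤ ⟪b 0, x - y⟫_ℝ)
    (hbox : ∀ z ∈ logBox b r N R θ.rIn, y + z ∈ Ω) :
    ∫⁻ z in logBox b r N R θ.rIn, ENNReal.ofReal (⟪b 0, z⟫_ℝ)⁻¹ ≤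
      ENNReal.ofReal ((1 + alphaC p σ / (r * Real.exp (-(θ.rIn * N)))) ^ p) *
        wnormC p Ω σ fun x => logProfile b r N R ((p - 1) / p) θ (x - y) := by
  have hα := alphaC_pos hp hσ
  have hsub : (· - y) ⁻¹' logBox b r N R θ.rIn ⊆ Ω := fun x hx => by
    simpa using hbox _ hx
  have hmeas : MeasurableSet (logBox b r N R θ.rIn) := isClosed_logBox.measurableSet
  rw [← (measurePreserving_sub_right volume y).setLIntegral_comp_preimage hmeas (by fun_prop),
    wnormC, ← lintegral_const_mul' _ _ ENNReal.ofReal_ne_top]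
  refine (setLIntegral_mono' (hmeas.preimage (by fun_prop)) fun x hx => ?_).trans
    (lintegral_mono_set hsub)
  rw [← ENNReal.ofReal_mul (by positivity)]
  exact ENNReal.ofReal_le_ofReal (inv_le_mul_logProfile_rpow_div hp hα hr hN hR infDist_nonneg
    (hdist x (hsub hx)) hx)

theorem lamC_le_of_logBox_subset (hp : 1 < p) (hσ : 0 < σ) (hΩ : IsOpen Ω) (hbd : IsBounded Ω)
    (hr : 0 < r) (hN : 0 < N) (hR : N * (r * Real.exp (θ.rOut * N)) ≤ R)
    (hM : ∀ q, ‖fderiv ℝ θ q‖ ≤ M)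
    (hdist : ∀ x ∈ Ω, infDist x (frontier Ω) ≤ ⟪b 0, x - y⟫_ℝ)
    (hbox : ∀ z ∈ logBox b r N R θ.rOut, y + z ∈ Ω) :
    lamC p Ω σ ≤ ENNReal.ofReal (((p - 1) / p + M / N) ^ p * (θ.rOut / θ.rIn) ^ (m + 1) *
      (1 + alphaC p σ / (r * Real.exp (-(θ.rIn * N)))) ^ p) := by
  set u := fun x => logProfile b r N R ((p - 1) / p) θ (x - y) with hu
  have hp0 : 0 < p := by linarith
  have hc : 0 < (p - 1) / p := div_pos (by linarith) hp0
  have hR0 : 0 < R := lt_of_lt_of_le (by have := θ.rOut_pos; positivity) hR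
  have hM0 : 0 ≤ M := (norm_nonneg _).trans (hM 0)
  have hratio : 0 < θ.rOut / θ.rIn := div_pos θ.rOut_pos θ.rIn_pos
  have hdiff : Differentiable ℝ u := (differentiable_logProfile hr hN hR0 hc).comp (by fun_prop)
  have hzero (x) (hx : x ∈ frontier Ω) : u x = 0 :=
    logProfile_eq_zero hr hN hR0 hc fun h =>
      (hΩ.frontier_eq.subset hx).2 (by simpa using hbox _ h)
  have hweight := setLIntegral_logBox_le_mul_wnormC (y := y) (b := b) (θ := θ) hp hσ hr hN hR0
    hdist fun z hz => hbox z (logBox_subset hr.le hN.le hR0.le θ.rIn_lt_rOut.le hz)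
  have hgrad : ∫⁻ x in Ω, ENNReal.ofReal (‖fderiv ℝ u x‖ ^ p) ≤
      ENNReal.ofReal (((p - 1) / p + M / N) ^ p) *
        ∫⁻ z in logBox b r N R θ.rOut, ENNReal.ofReal (⟪b 0, z⟫_ℝ)⁻¹ := by
    refine (setLIntegral_le_lintegral _ _).trans ?_
    simp only [hu, fderiv_comp_sub]
    rw [lintegral_sub_right_eq_self fun z =>
      ENNReal.ofReal (‖fderiv ℝ (logProfile b r N R ((p - 1) / p) θ) z‖ ^ p)]
    exact lintegral_norm_fderiv_logProfile_le hp hr hN hR hM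
  refine lamC_le_of_lintegral_le hp0 hbd hdiff.continuous.continuousOn (fun x _ => hdiff x) hzero
    ?_ ?_ ?_
  · intro h
    rw [h, mul_zero, setLIntegral_logBox_inv hr hN.le hR0.le θ.rIn_pos.le, nonpos_iff_eq_zero,
      ENNReal.ofReal_eq_zero] at hweight
    exact hweight.not_gt (mul_pos (pow_pos θ.rIn_pos _) (by positivity))
  · refine ne_top_of_le_ne_top (ENNReal.mul_ne_top ENNReal.ofReal_ne_top ?_) hgrad
    rw [setLIntegral_logBox_inv hr hN.le hR0.le θ.rOut_pos.le]
    exact ENNReal.ofReal_ne_top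
  · rw [ENNReal.ofReal_mul (by positivity), ENNReal.ofReal_mul (by positivity), mul_assoc,
      mul_assoc]
    refine hgrad.trans ?_
    rw [setLIntegral_logBox_inv_eq_mul hr hN.le hR0.le θ.rIn_pos θ.rOut_pos.le]
    gcongr

theorem tendsto_ofReal_mul_one_add_alphaC_div_rpow (hp : 1 < p) (K r : ℝ) :
    Tendsto (fun σ => ENNReal.ofReal (K * (1 + alphaC p σ / r) ^ p)) atTop
      (𝓝 (ENNReal.ofReal K)) := by
  have hlim := ((((tendsto_alphaC_atTop hp).div_const r).const_add 1).rpow_const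
    (p := p) (Or.inr (by linarith))).const_mul K
  rw [zero_div, add_zero, Real.one_rpow, mul_one] at hlim
  exact (ENNReal.continuous_ofReal.tendsto _).comp hlim

/- The bump has radii `1` and `a`; close to `1`, the ratio `a` makes up for the region where the
bump is not constant, and large `N` makes its gradient negligible. -/
theorem exists_contDiffBump_bound_lt {β : ℝ≥0∞} (hp : 1 < p)
    (hβ : ENNReal.ofReal (((p - 1) / p) ^ p) < β) :
    ∃ θ : ContDiffBump (0 : ℝ × (Fin m → ℝ)), ∃ M N : ℝ, 0 < N ∧ (∀ q, ‖fderiv ℝ θ q‖ ≤ M) ∧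
      ENNReal.ofReal (((p - 1) / p + M / N) ^ p * (θ.rOut / θ.rIn) ^ (m + 1)) < β := by
  have hratio : Tendsto (fun a : ℝ => ENNReal.ofReal (((p - 1) / p) ^ p * (a / 1) ^ (m + 1)))
      (𝓝[>] 1) (𝓝 (ENNReal.ofReal (((p - 1) / p) ^ p))) :=
    ((ENNReal.continuous_ofReal.comp (by fun_prop)).tendsto' _ _ (by simp)).mono_left
      nhdsWithin_le_nhds
  obtain ⟨a, ha, (ha₁ : 1 < a)⟩ :=
    ((hratio.eventually (gt_mem_nhds hβ)).and self_mem_nhdsWithin).exists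
  let θ : ContDiffBump (0 : ℝ × (Fin m → ℝ)) := ⟨1, a, one_pos, ha₁⟩
  obtain ⟨M, hM⟩ := (θ.hasCompactSupport.fderiv (𝕜 := ℝ)).exists_bound_of_continuous
    (θ.contDiff.continuous_fderiv (n := 1) one_ne_zero)
  have hgrad : Tendsto (fun N : ℝ => ENNReal.ofReal (((p - 1) / p + M / N) ^ p * (a / 1) ^ (m + 1)))
      atTop (𝓝 (ENNReal.ofReal (((p - 1) / p) ^ p * (a / 1) ^ (m + 1)))) := by
    have hlim := (((tendsto_const_nhds (x := M).div_atTop tendsto_id).const_add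
      ((p - 1) / p)).rpow_const (p := p) (Or.inr (by linarith))).mul_const ((a / 1) ^ (m + 1))
    rw [add_zero] at hlim
    exact (ENNReal.continuous_ofReal.tendsto _).comp hlim
  obtain ⟨N, hN, hN0⟩ := ((hgrad.eventually (gt_mem_nhds ha)).and (eventually_gt_atTop 0)).exists
  exact ⟨θ, M, N, hN0, hM, hN⟩

theorem eventually_lamC_lt {β : ℝ≥0∞} (hp : 1 < p) (hΩ : IsOpen Ω) (hne : Ω.Nonempty)
    (hbd : IsBounded Ω) (hconv : Convex ℝ Ω) (hβ : ENNReal.ofReal (((p - 1) / p) ^ p) < β) :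
    ∀ᶠ σ in atTop, lamC p Ω σ < β := by
  obtain ⟨y, hy, e, he, ρ, hρ, hball⟩ :=
    exists_ball_add_smul_subset hΩ hne (nonempty_frontier_of_isBounded hbd hne)
  obtain ⟨b, rfl⟩ := exists_orthonormalBasis_zeroth_eq (m := m) (by simp) he
  have hpos (x) (hx : x ∈ Ω) : 0 < ⟪b 0, x - y⟫_ℝ :=
    inner_sub_pos_of_ball_subset hΩ hconv (hΩ.frontier_eq.subset hy).2 he hρ hball hx
  obtain ⟨θ, M, N, hN, hM, hlt⟩ := exists_contDiffBump_bound_lt (m := m) hp hβ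
  obtain ⟨r, hr, (hr0 : 0 < r)⟩ := ((eventually_add_smul_mem_ball (y := y) he hρ
    (isCompact_logBox (b := b) (r := 1) (N := N) (R := N * Real.exp (θ.rOut * N)) (a := θ.rOut))
    fun z hz => inner_pos_of_mem_logBox one_pos hz).and self_mem_nhdsWithin).exists
  have hbox (z) (hz : z ∈ logBox b r N (r * (N * Real.exp (θ.rOut * N))) θ.rOut) : y + z ∈ Ω := by
    simpa [hr0.ne'] using hball (hr _ (inv_smul_mem_logBox hr0 hz))
  filter_upwards [(tendsto_ofReal_mul_one_add_alphaC_div_rpow hp _ _).eventually (gt_mem_nhds hlt),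
    eventually_gt_atTop 0] with σ hσlt hσ
  exact (lamC_le_of_logBox_subset hp hσ hΩ hbd hr0 hN (mul_left_comm _ _ _).le hM
    (fun x hx => infDist_frontier_le_inner_sub he hpos hx) hbox).trans_lt hσlt

end UpperBound

theorem lam_tendsto_Cp_general (n : ℕ) (hn : 1 ≤ n) (p : ℝ) (hp : 1 < p)
    (Ω : Set (EuclideanSpace ℝ (Fin n))) (hΩ : IsOpen Ω) (hne : Ω.Nonempty)
    (hbd : IsBounded Ω) (hconv : Convex ℝ Ω) :
    Tendsto (fun σ : ℝ => lamC p Ω σ) atTop (𝓝 (ENNReal.ofReal (((p - 1) / p) ^ p))) := by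
  obtain ⟨m, rfl⟩ := Nat.exists_eq_add_of_le' hn
  refine tendsto_order.2 ⟨fun β hβ => ?_, fun β hβ => eventually_lamC_lt hp hΩ hne hbd hconv hβ⟩
  filter_upwards [eventually_gt_atTop 0] with σ hσ
  exact hβ.trans_le (ofReal_rpow_le_lamC hp hσ hΩ hne hbd hconv)

/-- **Proposition 4.3, (4.5).** For `Ω ⊂ ℝⁿ` open, bounded, convex with `C²` boundary and
constant boundary parameter `σ`, one has `λ_p(Ω,σ) → C_p = ((p-1)/p)^p` as `σ → +∞`. -/
theorem lam_tendsto_Cp (n : ℕ) (hn : 1 ≤ n) (p : ℝ) (hp : 1 < p)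
    (Ω : Set (EuclideanSpace ℝ (Fin n))) (hΩ : IsOpen Ω) (hne : Ω.Nonempty)
    (hbd : IsBounded Ω) (hconv : Convex ℝ Ω) (hC2 : HasC2Boundary Ω) :
    Tendsto (fun σ : ℝ => lamC p Ω σ) atTop
      (𝓝 (ENNReal.ofReal (((p - 1) / p) ^ p))) :=
  lam_tendsto_Cp_general n hn p hp Ω hΩ hne hbd hconv

end RobinHardy
end
end
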